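/- Let p be a prime with p ≡ 1 (mod 3), and let k, n be nonnegative integers. Then (p² − 1)·B_3(p^k·n + p^k − 1) + (p^{2k} − p²)·B_3(n) = (p^{2k} − 1)·B_3(p·n + p − 1). -/

import Mathlib

/-- The hook length of the cell `(i, j)` in a Young diagram `μ`:
arm length + leg length + 1. -/
def YoungDiagram.hookLength (μ : YoungDiagram) (i j : ℕ) : ℕ :=
  μ.rowLen i + μ.colLen j - i - j - 1

/-- A Young diagram (equivalently, a partition) is a 3-core if none of its
hook numbers is divisible by 3. -/
def YoungDiagram.IsThreeCore (μ : YoungDiagram) : Prop :=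
  ∀ c ∈ μ.cells, ¬ (3 ∣ μ.hookLength c.1 c.2)

/-- `a3 n` is the number of 3-core partitions of `n`. -/
noncomputable def a3 (n : ℕ) : ℕ :=
  Nat.card {μ : YoungDiagram // μ.card = n ∧ μ.IsThreeCore}

/-- `A3 n` is the number of partition pairs of `n` in which each partition is a 3-core. -/
noncomputable def A3 (n : ℕ) : ℕ :=
  Nat.card {p : YoungDiagram × YoungDiagram //
    p.1.card + p.2.card = n ∧ p.1.IsThreeCore ∧ p.2.IsThreeCore}

/-- `B3 n` is the number of partition triples of `n` in which each partition is a 3-core. -/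
noncomputable def B3 (n : ℕ) : ℕ :=
  Nat.card {p : YoungDiagram × YoungDiagram × YoungDiagram //
    p.1.card + p.2.1.card + p.2.2.card = n ∧
    p.1.IsThreeCore ∧ p.2.1.IsThreeCore ∧ p.2.2.IsThreeCore}

open Finset

def c3 (z : ZMod 3) : ℤ := if z = 1 then 1 else if z = 2 then -1 else 0

def Sq (n : ℕ) : Finset (ℕ × ℕ × ℕ × ℕ) :=
  ((Icc 1 n) ×ˢ (Icc 1 n) ×ˢ (Icc 1 n) ×ˢ (Icc 1 n)).filter
    (fun v => v.1 * v.2.2.1 + v.2.1 * v.2.2.2 = n)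

lemma mem_Sq {n a b x y : ℕ} : (a, b, x, y) ∈ Sq n ↔
    0 < a ∧ 0 < b ∧ 0 < x ∧ 0 < y ∧ a * x + b * y = n := by
  simp only [Sq, mem_filter, mem_product, mem_Icc]
  constructor
  · rintro ⟨⟨h1, h2, h3, h4⟩, h⟩
    exact ⟨h1.1, h2.1, h3.1, h4.1, h⟩
  · rintro ⟨h1, h2, h3, h4, h⟩
    have e1 : a ≤ a * x := Nat.le_mul_of_pos_right _ h3
    have e2 : x ≤ a * x := Nat.le_mul_of_pos_left _ h1
    have e3 : b ≤ b * y := Nat.le_mul_of_pos_right _ h4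
    have e4 : y ≤ b * y := Nat.le_mul_of_pos_left _ h2
    refine ⟨⟨⟨h1, ?_⟩, ⟨h2, ?_⟩, ⟨h3, ?_⟩, ⟨h4, ?_⟩⟩, h⟩ <;> omega

/-- evaluate an integer function at a natural quadruple -/
def ev (F : ℤ → ℤ → ℤ → ℤ → ℤ) (v : ℕ × ℕ × ℕ × ℕ) : ℤ := F v.1 v.2.1 v.2.2.1 v.2.2.2

lemma Sq_swap1 (n : ℕ) (F : ℤ → ℤ → ℤ → ℤ → ℤ) :
    ∑ v ∈ Sq n, ev (fun a b x y => F x b a y) v = ∑ v ∈ Sq n, ev F v := by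
  refine Finset.sum_nbij' (fun v => (v.2.2.1, v.2.1, v.1, v.2.2.2))
    (fun v => (v.2.2.1, v.2.1, v.1, v.2.2.2)) ?_ ?_ ?_ ?_ ?_
  all_goals rintro ⟨a, b, x, y⟩
  all_goals simp only [mem_Sq, ev]
  · rintro ⟨h1, h2, h3, h4, h⟩
    exact ⟨h3, h2, h1, h4, by rw [← h]; ring⟩
  · rintro ⟨h1, h2, h3, h4, h⟩
    exact ⟨h3, h2, h1, h4, by rw [← h]; ring⟩
  all_goals intros; trivial

lemma Sq_swap2 (n : ℕ) (F : ℤ → ℤ → ℤ → ℤ → ℤ) :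
    ∑ v ∈ Sq n, ev (fun a b x y => F a y x b) v = ∑ v ∈ Sq n, ev F v := by
  refine Finset.sum_nbij' (fun v => (v.1, v.2.2.2, v.2.2.1, v.2.1))
    (fun v => (v.1, v.2.2.2, v.2.2.1, v.2.1)) ?_ ?_ ?_ ?_ ?_
  all_goals rintro ⟨a, b, x, y⟩
  all_goals simp only [mem_Sq, ev]
  · rintro ⟨h1, h2, h3, h4, h⟩
    exact ⟨h1, h4, h3, h2, by rw [← h]; ring⟩
  · rintro ⟨h1, h2, h3, h4, h⟩
    exact ⟨h1, h4, h3, h2, by rw [← h]; ring⟩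
  all_goals intros; trivial

lemma Sq_lt (n : ℕ) (F : ℤ → ℤ → ℤ → ℤ → ℤ) :
    ∑ v ∈ (Sq n).filter (fun v => v.2.2.1 < v.2.2.2), ev F v
      = ∑ v ∈ (Sq n).filter (fun v => v.2.2.2 < v.2.2.1), ev (fun a b x y => F b a y x) v := by
  refine Finset.sum_nbij' (fun v => (v.2.1, v.1, v.2.2.2, v.2.2.1))
    (fun v => (v.2.1, v.1, v.2.2.2, v.2.2.1)) ?_ ?_ ?_ ?_ ?_
  all_goals rintro ⟨a, b, x, y⟩
  all_goals simp only [mem_Sq, ev, mem_filter]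
  · rintro ⟨⟨h1, h2, h3, h4, h⟩, h5⟩
    exact ⟨⟨h2, h1, h4, h3, by rw [← h]; ring⟩, h5⟩
  · rintro ⟨⟨h1, h2, h3, h4, h⟩, h5⟩
    exact ⟨⟨h2, h1, h4, h3, by rw [← h]; ring⟩, h5⟩
  all_goals intros; trivial

lemma Sq_tau (n : ℕ) (F : ℤ → ℤ → ℤ → ℤ → ℤ) :
    ∑ v ∈ (Sq n).filter (fun v => v.2.2.2 < v.2.2.1), ev F v
      = ∑ v ∈ (Sq n).filter (fun v => v.2.2.2 < v.2.2.1),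
          ev (fun a b x y => F y (x - y) (a + b) a) v := by
  refine Finset.sum_nbij' (fun v => (v.2.2.2, v.2.2.1 - v.2.2.2, v.1 + v.2.1, v.1))
    (fun v => (v.2.2.2, v.2.2.1 - v.2.2.2, v.1 + v.2.1, v.1)) ?_ ?_ ?_ ?_ ?_
  all_goals rintro ⟨a, b, x, y⟩
  all_goals simp only [mem_Sq, ev, mem_filter]
  all_goals rintro ⟨⟨h1, h2, h3, h4, h⟩, h5⟩
  all_goals obtain ⟨t, rfl⟩ := Nat.exists_eq_add_of_lt h5
  · refine ⟨⟨h4, by omega, by omega, h1, ?_⟩, by omega⟩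
    rw [show y + t + 1 - y = t + 1 by omega, ← h]; ring
  · refine ⟨⟨h4, by omega, by omega, h1, ?_⟩, by omega⟩
    rw [show y + t + 1 - y = t + 1 by omega, ← h]; ring
  · simp; omega
  · simp; omega
  · rw [show y + t + 1 - y = t + 1 by omega]; push_cast
    congr 1 <;> ring

lemma liouville (n : ℕ) (G : ℤ → ℤ → ℤ → ℤ → ℤ)
    (h : ∀ a b x y : ℤ, a * x + b * y = n →
      G a b x y + G b a y x + (G y (x - y) (a + b) a + G (x - y) y a (a + b)) = 0) :
    ∑ v ∈ Sq n, ev G v = ∑ v ∈ (Sq n).filter (fun v => v.2.2.1 = v.2.2.2), ev G v := by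
  have key : ∑ v ∈ (Sq n).filter (fun v => v.2.2.2 < v.2.2.1),
      ev (fun a b x y => G a b x y + G b a y x) v = 0 := by
    have h1 := Sq_tau n (fun a b x y => G a b x y + G b a y x)
    have h2 : ∑ v ∈ (Sq n).filter (fun v => v.2.2.2 < v.2.2.1),
      (ev (fun a b x y => G a b x y + G b a y x) v +
        ev (fun a b x y => G y (x - y) (a + b) a + G (x - y) y a (a + b)) v) = 0 := by
      apply Finset.sum_eq_zero
      rintro ⟨a, b, x, y⟩ hv
      simp only [mem_filter, mem_Sq] at hv
      apply h
      exact_mod_cast hv.1.2.2.2.2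
    rw [Finset.sum_add_distrib] at h2
    beta_reduce at h1
    linarith
  have e1 := Finset.sum_filter_add_sum_filter_not (Sq n) (fun v => v.2.2.1 = v.2.2.2) (ev G)
  have e2 := Finset.sum_filter_add_sum_filter_not
    ((Sq n).filter (fun v => ¬ v.2.2.1 = v.2.2.2)) (fun v => v.2.2.2 < v.2.2.1) (ev G)
  rw [filter_filter, filter_filter] at e2
  have e3 : (Sq n).filter (fun v => ¬ v.2.2.1 = v.2.2.2 ∧ v.2.2.2 < v.2.2.1)
     = (Sq n).filter (fun v => v.2.2.2 < v.2.2.1) := by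
    apply filter_congr; intros; omega
  have e4 : (Sq n).filter (fun v => ¬ v.2.2.1 = v.2.2.2 ∧ ¬ v.2.2.2 < v.2.2.1)
     = (Sq n).filter (fun v => v.2.2.1 < v.2.2.2) := by
    apply filter_congr; intros; omega
  rw [e3, e4, Sq_lt] at e2
  have e5 : ∑ v ∈ (Sq n).filter (fun v => v.2.2.2 < v.2.2.1), ev G v +
     ∑ v ∈ (Sq n).filter (fun v => v.2.2.2 < v.2.2.1), ev (fun a b x y => G b a y x) v = 0 := by
    rw [← Finset.sum_add_distrib]; exact key
  linarith

/-- diagonal sums -/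
lemma Sq_diag (n : ℕ) (G : ℤ → ℤ → ℤ → ℤ → ℤ) :
    ∑ v ∈ (Sq n).filter (fun v => v.2.2.1 = v.2.2.2), ev G v =
    ∑ p ∈ n.divisorsAntidiagonal, ∑ i ∈ range p.1,
      (if i = 0 then 0 else G i (p.1 - i) p.2 p.2) := by
  have : ∀ p ∈ n.divisorsAntidiagonal, ∑ i ∈ range p.1,
      (if i = 0 then 0 else G i (p.1 - i) p.2 p.2) = 
      ∑ i ∈ (range p.1).filter (fun i => i ≠ 0), G i (p.1 - i) p.2 p.2 := by
    intro p _
    rw [Finset.sum_filter]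
    apply Finset.sum_congr rfl
    intro i _
    by_cases hi : i = 0 <;> simp [hi]
  rw [Finset.sum_congr rfl this, Finset.sum_sigma']
  refine Finset.sum_nbij' (fun v => ⟨(v.1 + v.2.1, v.2.2.1), v.1⟩)
    (fun s => (s.2, s.1.1 - s.2, s.1.2, s.1.2)) ?_ ?_ ?_ ?_ ?_
  · rintro ⟨a, b, x, y⟩
    simp only [mem_Sq, mem_filter, mem_sigma, Nat.mem_divisorsAntidiagonal, mem_range]
    rintro ⟨⟨h1, h2, h3, h4, h⟩, h5⟩
    subst h5
    refine ⟨⟨by rw [← h]; ring, ?_⟩, by omega, by omega⟩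
    have := Nat.mul_pos h1 h3
    omega
  · rintro ⟨⟨e, x⟩, a⟩
    simp only [mem_Sq, mem_filter, mem_sigma, Nat.mem_divisorsAntidiagonal, mem_range]
    rintro ⟨⟨h1, h2⟩, h3, h4⟩
    have hx : 0 < x := by
      rcases Nat.eq_zero_or_pos x with h | h
      · subst h; omega
      · exact h
    refine ⟨⟨by omega, by omega, hx, hx, ?_⟩, trivial⟩
    rw [← add_mul, show a + (e - a) = e by omega, h1]
  · rintro ⟨a, b, x, y⟩
    simp only [mem_Sq, mem_filter]
    rintro ⟨⟨h1, h2, h3, h4, h⟩, h5⟩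
    subst h5
    simp
  · rintro ⟨⟨e, x⟩, a⟩
    simp only [mem_sigma, mem_filter, mem_range]
    rintro ⟨_, h3, h4⟩
    have : a + (e - a) = e := by omega
    simp [this]
  · rintro ⟨a, b, x, y⟩
    simp only [mem_Sq, mem_filter]
    rintro ⟨⟨h1, h2, h3, h4, h⟩, h5⟩
    subst h5
    simp [ev]

/-- convolution as quadruple sums -/
lemma Sq_conv (n : ℕ) (F G : ℕ × ℕ → ℤ) :
    ∑ q ∈ antidiagonal n, (∑ p ∈ q.1.divisorsAntidiagonal, F p) *
       (∑ p ∈ q.2.divisorsAntidiagonal, G p) =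
    ∑ v ∈ Sq n, F (v.1, v.2.2.1) * G (v.2.1, v.2.2.2) := by
  simp only [Finset.sum_mul_sum, ← Finset.sum_product']
  rw [Finset.sum_sigma']
  refine Finset.sum_nbij' (fun s => (s.2.1.1, s.2.2.1, s.2.1.2, s.2.2.2))
    (fun v => ⟨(v.1 * v.2.2.1, v.2.1 * v.2.2.2), ((v.1, v.2.2.1), (v.2.1, v.2.2.2))⟩) ?_ ?_ ?_ ?_ ?_
  · rintro ⟨⟨m, l⟩, ⟨a, x⟩, ⟨b, y⟩⟩
    simp only [mem_Sq, mem_sigma, HasAntidiagonal.mem_antidiagonal, mem_product, Nat.mem_divisorsAntidiagonal]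
    rintro ⟨h, ⟨h1, h2⟩, h3, h4⟩
    subst h1 h3
    refine ⟨?_, ?_, ?_, ?_, h⟩ <;> apply Nat.pos_of_ne_zero <;> rintro rfl <;> simp_all
  · rintro ⟨a, b, x, y⟩
    simp only [mem_Sq, mem_sigma, HasAntidiagonal.mem_antidiagonal, mem_product, Nat.mem_divisorsAntidiagonal]
    rintro ⟨h1, h2, h3, h4, h⟩
    exact ⟨h, ⟨trivial, (Nat.mul_pos h1 h3).ne'⟩, trivial, (Nat.mul_pos h2 h4).ne'⟩
  · rintro ⟨⟨m, l⟩, ⟨a, x⟩, ⟨b, y⟩⟩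
    simp only [mem_sigma, HasAntidiagonal.mem_antidiagonal, mem_product, Nat.mem_divisorsAntidiagonal]
    rintro ⟨h, ⟨h1, h2⟩, h3, h4⟩
    subst h1 h3
    rfl
  · rintro ⟨a, b, x, y⟩ _
    rfl
  · rintro ⟨⟨m, l⟩, ⟨a, x⟩, ⟨b, y⟩⟩ _
    rfl


def ind (p q r s a b x y : ZMod 3) : ℤ := if a = p ∧ b = q ∧ x = r ∧ y = s then 1 else 0

def aa (m : ℕ) : ℤ := ∑ p ∈ m.divisorsAntidiagonal, c3 p.1
def sg (m : ℕ) : ℤ := ∑ p ∈ m.divisorsAntidiagonal, (p.1 : ℤ)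
def ff (m : ℕ) : ℤ := ∑ p ∈ m.divisorsAntidiagonal, (p.1 : ℤ) ^ 2 * c3 p.2

lemma anti_res (n r : ℕ) (F : ℕ → ℕ → ℤ) :
    ∑ q ∈ antidiagonal (3 * n + 1 + r), (if (q.1 : ZMod 3) = 1 ∧ r ≤ q.2 then F q.1 q.2 else 0) =
    ∑ q ∈ antidiagonal n, F (3 * q.1 + 1) (3 * q.2 + r) := by
  rw [← Finset.sum_filter]
  symm
  have key : ∀ m : ℕ, (m : ZMod 3) = 1 ↔ m % 3 = 1 := by
    intro m
    have := ZMod.natCast_eq_natCast_iff' m 1 3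
    simpa using this
  refine Finset.sum_nbij' (fun q => (3 * q.1 + 1, 3 * q.2 + r))
    (fun q => (q.1 / 3, (q.2 - r) / 3)) ?_ ?_ ?_ ?_ ?_
  all_goals rintro ⟨i, j⟩
  all_goals simp only [HasAntidiagonal.mem_antidiagonal, mem_filter, key, Prod.mk.injEq]
  all_goals intros
  all_goals first | trivial | omega

/-! step 1 -/
def h1f (a b x y : ZMod 3) : ℤ := if a * x = 1 ∧ b * y = 1 then c3 a * c3 b else 0
def e1f (a b x y : ZMod 3) : ℤ := -2 * (ind 0 2 2 1 a b x y + ind 0 1 1 2 a b x y)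
def g1f (a b x y : ZMod 3) : ℤ := h1f a b x y + (e1f a b x y - e1f x b a y)

lemma g1f_id : ∀ a b x y : ZMod 3, a * x + b * y = 2 →
   g1f a b x y + g1f b a y x + (g1f y (x - y) (a + b) a + g1f (x - y) y a (a + b)) = 0 := by
  decide

lemma g1f_diag : ∀ e x i : ZMod 3, e * x = 2 → g1f i (e - i) x x = if i = x then 1 else 0 := by
  decide

lemma sum_range_three (u : ℕ) (F : ℕ → ℤ) :
    ∑ i ∈ range (3 * u), F i = ∑ j ∈ range u, (F (3 * j) + F (3 * j + 1) + F (3 * j + 2)) := by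
  induction u with
  | zero => simp
  | succ u ih =>
    rw [show 3 * (u + 1) = 3 * u + 1 + 1 + 1 by ring, sum_range_succ, sum_range_succ,
      sum_range_succ, sum_range_succ, ih]
    ring

lemma z3_cases (m : ℕ) : ∃ u, (m = 3 * u ∧ (m : ZMod 3) = 0) ∨ (m = 3 * u + 1 ∧ (m : ZMod 3) = 1)
    ∨ (m = 3 * u + 2 ∧ (m : ZMod 3) = 2) := by
  have h3 : (3 : ZMod 3) = 0 := rfl
  refine ⟨m / 3, ?_⟩
  have : m % 3 = 0 ∨ m % 3 = 1 ∨ m % 3 = 2 := by omega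
  have hm := Nat.div_add_mod m 3
  have hc : (m : ZMod 3) = (m % 3 : ℕ) := by simp
  rcases this with h | h | h
  · left; exact ⟨by omega, by rw [hc, h]; rfl⟩
  · right; left; exact ⟨by omega, by rw [hc, h]; rfl⟩
  · right; right; exact ⟨by omega, by rw [hc, h]; rfl⟩

lemma cast0 (j : ℕ) : ((3 * j : ℕ) : ZMod 3) = 0 := by
  push_cast; rw [show (3 : ZMod 3) = 0 from rfl]; ring
lemma cast1 (j : ℕ) : ((3 * j + 1 : ℕ) : ZMod 3) = 1 := by
  push_cast; rw [show (3 : ZMod 3) = 0 from rfl]; ring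
lemma cast2 (j : ℕ) : ((3 * j + 2 : ℕ) : ZMod 3) = 2 := by
  push_cast; rw [show (3 : ZMod 3) = 0 from rfl]; ring

lemma count1 (e : ℕ) (x : ZMod 3) (h : (e : ZMod 3) * x = 2) :
    3 * ∑ i ∈ range e, (if (i : ZMod 3) = x then (1 : ℤ) else 0) = e + c3 x := by
  obtain ⟨u, ⟨h1, h2⟩ | ⟨h1, h2⟩ | ⟨h1, h2⟩⟩ := z3_cases e
  · rw [h2, zero_mul] at h; exact absurd h (by decide)
  · rw [h2, one_mul] at h
    subst h h1
    rw [sum_range_succ, sum_range_three]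
    simp only [cast0, cast1, cast2]
    simp [c3, show (0 : ZMod 3) ≠ 2 by decide, show (1 : ZMod 3) ≠ 2 by decide,
      show (2 : ZMod 3) ≠ 1 by decide]
  · have hx : x = 1 := by
      rw [h2] at h; revert h; revert x; decide
    subst hx h1
    rw [sum_range_succ, sum_range_succ, sum_range_three]
    simp only [cast0, cast1, cast2]
    simp [c3, show (0 : ZMod 3) ≠ 1 by decide, show (2 : ZMod 3) ≠ 1 by decide]
    ring

lemma aa_zero (m : ℕ) (h : (m : ZMod 3) = 2) : ∑ p ∈ m.divisorsAntidiagonal, c3 p.2 = 0 := by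
  have h1 : ∑ p ∈ m.divisorsAntidiagonal, c3 p.2 = ∑ p ∈ m.divisorsAntidiagonal, c3 p.1 := by
    conv_lhs => rw [← Nat.map_swap_divisorsAntidiagonal, Finset.sum_map]
    rfl
  have h2 : ∑ p ∈ m.divisorsAntidiagonal, (c3 p.1 + c3 p.2) = 0 := by
    apply Finset.sum_eq_zero
    intro p hp
    rw [Nat.mem_divisorsAntidiagonal] at hp
    have : (p.1 : ZMod 3) * p.2 = 2 := by rw [← h, ← hp.1]; push_cast; rfl
    revert this
    generalize (p.1 : ZMod 3) = s
    generalize (p.2 : ZMod 3) = t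
    revert s t; decide
  rw [sum_add_distrib] at h2
  linarith

lemma step1 (n : ℕ) :
    3 * ∑ q ∈ antidiagonal n, aa (3 * q.1 + 1) * aa (3 * q.2 + 1) = sg (3 * n + 2) := by
  have hM : ((3 * n + 2 : ℕ) : ZMod 3) = 2 := cast2 n
  -- conv
  have e1 : ∑ q ∈ antidiagonal n, aa (3 * q.1 + 1) * aa (3 * q.2 + 1) =
      ∑ v ∈ Sq (3 * n + 2), ev (fun a b x y => h1f a b x y) v := by
    rw [← anti_res n 1 (fun i j => aa i * aa j)]
    have := Sq_conv (3 * n + 2) (fun p => if (p.1 * p.2 : ZMod 3) = 1 then c3 p.1 else 0)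
      (fun p => if (p.1 * p.2 : ZMod 3) = 1 then c3 p.1 else 0)
    rw [show 3 * n + 1 + 1 = 3 * n + 2 by ring]
    trans
    · trans
      swap
      · exact this
      · apply Finset.sum_congr rfl
        rintro ⟨i, j⟩ hq
        rw [HasAntidiagonal.mem_antidiagonal] at hq
        have hi : ∀ m : ℕ, ∑ p ∈ m.divisorsAntidiagonal,
            (if (p.1 * p.2 : ZMod 3) = 1 then c3 p.1 else 0) =
            if (m : ZMod 3) = 1 then aa m else 0 := by
          intro m
          rw [aa]
          split_ifs with hm
          · apply Finset.sum_congr rfl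
            intro p hp
            rw [Nat.mem_divisorsAntidiagonal] at hp
            rw [if_pos]
            rw [← hm, ← hp.1]; push_cast; rfl
          · apply Finset.sum_eq_zero
            intro p hp
            rw [Nat.mem_divisorsAntidiagonal] at hp
            rw [if_neg]
            intro h; apply hm
            rw [← h, ← hp.1]; push_cast; rfl
        simp only [hi]
        have hij : (i : ZMod 3) + j = 2 := by rw [← hM, ← hq]; push_cast; rfl
        by_cases h : (i : ZMod 3) = 1
        · have hj : (j : ZMod 3) = 1 := by
            rw [h] at hij; revert hij; generalize (j : ZMod 3) = t; revert t; decide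
          have hj0 : 1 ≤ j := by
            rcases Nat.eq_zero_or_pos j with h0 | h0
            · subst h0; exact absurd hj (by decide)
            · exact h0
          simp [h, hj, hj0]
        · simp [h]
    · apply Finset.sum_congr rfl
      rintro ⟨a, b, x, y⟩ _
      simp only [ev, h1f]
      push_cast
      by_cases h : (a * x : ZMod 3) = 1 <;> by_cases h' : (b * y : ZMod 3) = 1 <;> simp [h, h']
  have e2 : ∑ v ∈ Sq (3 * n + 2), ev (fun a b x y => g1f a b x y) v =
      ∑ v ∈ Sq (3 * n + 2), ev (fun a b x y => h1f a b x y) v := by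
    have := Sq_swap1 (3 * n + 2) (fun a b x y => e1f a b x y)
    have h2 : ∀ v, ev (fun a b x y => g1f a b x y) v = ev (fun a b x y => h1f a b x y) v +
       (ev (fun a b x y => e1f a b x y) v - ev (fun a b x y => e1f x b a y) v) := fun v => rfl
    simp only [h2]
    rw [sum_add_distrib, sum_sub_distrib, this]
    ring
  rw [e1, ← e2, liouville, Sq_diag, Finset.mul_sum]
  · have : ∀ p ∈ (3 * n + 2).divisorsAntidiagonal, 3 * (∑ i ∈ range p.1,
      if i = 0 then (0 : ℤ) else g1f ((i : ℤ) : ZMod 3) (((p.1 : ℤ) - (i : ℤ) : ℤ) : ZMod 3)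
        ((p.2 : ℤ) : ZMod 3) ((p.2 : ℤ) : ZMod 3)) = p.1 + c3 p.2 := by
      intro p hp
      rw [Nat.mem_divisorsAntidiagonal] at hp
      have hq : (p.1 : ZMod 3) * p.2 = 2 := by rw [← hM, ← hp.1]; push_cast; rfl
      rw [← count1 p.1 p.2 hq]
      congr 1
      apply Finset.sum_congr rfl
      intro i _
      push_cast
      rw [g1f_diag _ _ _ hq]
      by_cases hi : i = 0
      · subst hi
        simp only [if_true, Nat.cast_zero]
        rw [if_neg]
        intro h0
        rw [← h0, mul_zero] at hq
        exact absurd hq (by decide)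
      · simp [hi]
    rw [Finset.sum_congr rfl this, sum_add_distrib, aa_zero _ hM, add_zero, sg]
  · intro a b x y h
    have h' : (a : ZMod 3) * x + b * y = 2 := by
      rw [← hM]
      have := congrArg (fun z : ℤ => (z : ZMod 3)) h
      push_cast at this ⊢
      exact this
    have := g1f_id a b x y h'
    push_cast
    exact this


/-! step 2 -/
def hb (a _b x _y : ZMod 3) : ℤ := if a * x = 1 then c3 a else 0
def p1a (a b x y : ZMod 3) : ℤ :=
  ind 0 0 1 2 a b x y - ind 1 1 2 1 a b x y + ind 1 2 1 1 a b x y - ind 0 1 2 0 a b x y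
def p1x (a b x y : ZMod 3) : ℤ := - ind 1 1 0 0 a b x y
def p1y (a b x y : ZMod 3) : ℤ := - ind 0 1 1 0 a b x y
def p2a (a b x y : ZMod 3) : ℤ := ind 0 0 2 2 a b x y - ind 0 0 1 2 a b x y
def p2b (a b x y : ZMod 3) : ℤ :=
  ind 2 2 2 1 a b x y - ind 1 2 2 2 a b x y - ind 0 0 2 2 a b x y
def p2x (a b x y : ZMod 3) : ℤ := - ind 2 1 0 0 a b x y

def ga (a b x y : ZMod 3) : ℤ := p1a a b x y - p1x x b a y + p2a a b x y - p2a a y x b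
def gb (a b x y : ZMod 3) : ℤ := hb a b x y + p2b a b x y
def gx (a b x y : ZMod 3) : ℤ := p1x a b x y - p1a x b a y + p2x a b x y - p2x a y x b
def gy (a b x y : ZMod 3) : ℤ := p1y a b x y - p1y x b a y - p2b a y x b

lemma g_id : ∀ a b x y : ZMod 3, a * x + b * y = 0 →
    (ga a b x y + gb b a y x + (gx y (x - y) (a + b) a + gy y (x - y) (a + b) a
       + gx (x - y) y a (a + b) + gy (x - y) y a (a + b)) = 0) ∧
    (gb a b x y + ga b a y x + (gx y (x - y) (a + b) a + gy (x - y) y a (a + b)) = 0) ∧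
    (gx a b x y + gy b a y x + (gb y (x - y) (a + b) a + ga (x - y) y a (a + b)) = 0) ∧
    (gy a b x y + gx b a y x + (ga y (x - y) (a + b) a - gb y (x - y) (a + b) a
       - ga (x - y) y a (a + b) + gb (x - y) y a (a + b)) = 0) := by
  decide +kernel

def H2 (a b x y : ℤ) : ℤ := hb a b x y * b
def P1 (a b x y : ℤ) : ℤ := p1a a b x y * a + p1x a b x y * x + p1y a b x y * y
def P2 (a b x y : ℤ) : ℤ := p2a a b x y * a + p2b a b x y * b + p2x a b x y * x
def G2 (a b x y : ℤ) : ℤ := ga a b x y * a + gb a b x y * b + gx a b x y * x + gy a b x y * y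

lemma G2_eq (a b x y : ℤ) : G2 a b x y =
    H2 a b x y + (P1 a b x y - P1 x b a y) + (P2 a b x y - P2 a y x b) := by
  simp only [G2, H2, P1, P2, ga, gb, gx, gy]; ring

lemma G2_sum (n : ℕ) : ∑ v ∈ Sq n, ev G2 v = ∑ v ∈ Sq n, ev H2 v := by
  have h2 : ∀ v, ev G2 v = ev H2 v + (ev P1 v - ev (fun a b x y => P1 x b a y) v)
     + (ev P2 v - ev (fun a b x y => P2 a y x b) v) := fun v => G2_eq _ _ _ _
  simp only [h2]
  rw [sum_add_distrib, sum_add_distrib, sum_sub_distrib, sum_sub_distrib, Sq_swap1 n P1, Sq_swap2 n P2]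
  ring

lemma G2_id (a b x y : ℤ) (h : (a : ZMod 3) * x + b * y = 0) :
    G2 a b x y + G2 b a y x + (G2 y (x - y) (a + b) a + G2 (x - y) y a (a + b)) = 0 := by
  obtain ⟨h1, h2, h3, h4⟩ := g_id a b x y h
  simp only [G2]
  push_cast
  linear_combination a * h1 + b * h2 + x * h3 + y * h4

lemma sum_lin (u : ℕ) (α β : ℤ) :
    2 * ∑ j ∈ range u, (α + β * j) = 2 * α * u + β * (u * (u - 1)) := by
  induction u with
  | zero => simp
  | succ u ih => rw [sum_range_succ, mul_add, ih]; push_cast; ring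

lemma diag_tab : ∀ e i x : ZMod 3, e * x = 0 →
   ga i (e - i) x x = (if e = 0 ∧ i = 0 ∧ x = 2 then 1 else if e = 0 ∧ i = 1 ∧ x = 1 then 1 else 0) ∧
   gb i (e - i) x x = (if e = 0 ∧ i = 0 ∧ x = 2 then -1 else if e = 0 ∧ i = 1 ∧ x = 1 then 1 else
     if e = 0 ∧ i ≠ 0 ∧ x = 2 then -1 else 0) ∧
   gx i (e - i) x x + gy i (e - i) x x = (if e = 0 ∧ i = 1 ∧ x = 1 then -1 else
     if e = 0 ∧ i = 1 ∧ x = 2 then 1 else if e = 0 ∧ i = 2 ∧ x = 1 then 1 else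
     if e = 0 ∧ i = 2 ∧ x = 2 then -1 else 0) := by
  decide +kernel

lemma diag2 (e x : ℕ) (h : (e : ZMod 3) * x = 0) :
    3 * ∑ i ∈ range e, (if i = 0 then 0 else G2 i (e - i) x x)
      = if (e : ZMod 3) = 0 then (e : ℤ) ^ 2 * c3 x else 0 := by
  have hG : ∀ i : ℕ, G2 i (e - i) x x = ga i ((e : ZMod 3) - i) x x * i +
      gb i ((e : ZMod 3) - i) x x * ((e : ℤ) - i)
      + (gx i ((e : ZMod 3) - i) x x + gy i ((e : ZMod 3) - i) x x) * x := by
    intro i; simp only [G2]; push_cast; ring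
  simp only [hG]
  have d1 := fun i : ZMod 3 => (diag_tab e i x h).1
  have d2 := fun i : ZMod 3 => (diag_tab e i x h).2.1
  have d3 := fun i : ZMod 3 => (diag_tab e i x h).2.2
  simp only [d1, d2, d3]
  split_ifs with he
  · obtain ⟨u, ⟨h1, h2⟩ | ⟨h1, h2⟩ | ⟨h1, h2⟩⟩ := z3_cases e
    · rw [h1, sum_range_three]
      simp only [cast0, cast1, cast2]
      have n1 : (0 : ZMod 3) ≠ 2 := by decide
      have n2 : (1 : ZMod 3) ≠ 2 := by decide
      have n3 : (2 : ZMod 3) ≠ 1 := by decide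
      have n4 : (2 : ZMod 3) ≠ 0 := by decide
      have n5 : (0 : ZMod 3) ≠ 1 := by decide
      obtain ⟨w, ⟨_, hx⟩ | ⟨_, hx⟩ | ⟨_, hx⟩⟩ := z3_cases x
      · simp [hx, n1, n2, n3, n4, n5, c3]
      · simp [hx, n1, n2, n3, n4, n5, c3]
        have := sum_lin u (3 * u) 0
        simp at this
        ring_nf
      · simp only [hx, c3]
        simp [n1, n2, n3, n4, n5]
        have hs : ∀ j ∈ range u, ((if j = 0 then (0 : ℤ) else 3 * j + (3 * j - 3 * u)) +
          (3 * j + 1 - 3 * u + x) + (3 * j + 2 - 3 * u + -x)) = 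
          ((3 - 9 * u) + 12 * j) + (if j = 0 then 3 * (u : ℤ) else 0) := by
          intro j _
          by_cases hj : j = 0
          · subst hj; simp; ring
          · simp [hj]; ring
        rw [Finset.sum_congr rfl hs, sum_add_distrib]
        have hl := sum_lin u (3 - 9 * u) 12
        have hi : ∑ j ∈ range u, (if j = 0 then 3 * (u : ℤ) else 0) = 3 * u := by
          rw [Finset.sum_ite_eq' (range u) 0 (fun _ => 3 * (u : ℤ))]
          split_ifs with hu
          · rfl
          · simp at hu; simp [hu]
        rw [hi]
        nlinarith [hl]
    · rw [h2] at he; exact absurd he (by decide)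
    · rw [h2] at he; exact absurd he (by decide)
  · simp [he]

lemma aa_res (m : ℕ) : ∑ p ∈ m.divisorsAntidiagonal,
    (if (p.1 * p.2 : ZMod 3) = 1 then c3 p.1 else 0) = if (m : ZMod 3) = 1 then aa m else 0 := by
  rw [aa]
  split_ifs with hm
  · apply Finset.sum_congr rfl
    intro p hp
    rw [Nat.mem_divisorsAntidiagonal] at hp
    rw [if_pos]
    rw [← hm, ← hp.1]; push_cast; rfl
  · apply Finset.sum_eq_zero
    intro p hp
    rw [Nat.mem_divisorsAntidiagonal] at hp
    rw [if_neg]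
    intro h; apply hm
    rw [← h, ← hp.1]; push_cast; rfl

lemma step2 (n : ℕ) :
    ∑ q ∈ antidiagonal n, aa (3 * q.1 + 1) * sg (3 * q.2 + 2) = 3 * ff (n + 1) := by
  have hM : ((3 * (n + 1) : ℕ) : ZMod 3) = 0 := cast0 _
  have e1 : ∑ q ∈ antidiagonal n, aa (3 * q.1 + 1) * sg (3 * q.2 + 2) =
      ∑ v ∈ Sq (3 * (n + 1)), ev H2 v := by
    rw [← anti_res n 2 (fun i j => aa i * sg j)]
    have := Sq_conv (3 * (n + 1)) (fun p => if (p.1 * p.2 : ZMod 3) = 1 then c3 p.1 else 0)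
      (fun p => p.1)
    rw [show 3 * n + 1 + 2 = 3 * (n + 1) by ring]
    trans
    · trans
      swap
      · exact this
      · apply Finset.sum_congr rfl
        rintro ⟨i, j⟩ hq
        rw [HasAntidiagonal.mem_antidiagonal] at hq
        simp only [aa_res]
        have hij : (i : ZMod 3) + j = 0 := by rw [← hM, ← hq]; push_cast; rfl
        by_cases h : (i : ZMod 3) = 1
        · have hj : (j : ZMod 3) = 2 := by
            rw [h] at hij; revert hij; generalize (j : ZMod 3) = t; revert t; decide
          have hj0 : 2 ≤ j := by
            by_contra hlt
            have : j = 0 ∨ j = 1 := by omega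
            rcases this with h0 | h0 <;> subst h0 <;> exact absurd hj (by decide)
          simp [h, hj0, sg]
        · simp [h]
    · apply Finset.sum_congr rfl
      rintro ⟨a, b, x, y⟩ _
      simp only [ev, H2, hb]
      push_cast
      rfl
  rw [e1, ← G2_sum, liouville]
  · have h3 : 3 * ∑ v ∈ (Sq (3 * (n + 1))).filter (fun v => v.2.2.1 = v.2.2.2), ev G2 v
        = 3 * (3 * ff (n + 1)) := by
      rw [Sq_diag, Finset.mul_sum]
      have : ∀ p ∈ (3 * (n + 1)).divisorsAntidiagonal, 3 * (∑ i ∈ range p.1,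
        if i = 0 then (0 : ℤ) else G2 i (p.1 - i) p.2 p.2) =
          if (p.1 : ZMod 3) = 0 then (p.1 : ℤ) ^ 2 * c3 p.2 else 0 := by
        intro p hp
        rw [Nat.mem_divisorsAntidiagonal] at hp
        apply diag2
        rw [← hM, ← hp.1]; push_cast; rfl
      rw [Finset.sum_congr rfl this, ← Finset.sum_filter, ff, Finset.mul_sum, Finset.mul_sum]
      symm
      refine Finset.sum_nbij' (fun p => (3 * p.1, p.2)) (fun p => (p.1 / 3, p.2)) ?_ ?_ ?_ ?_ ?_
      · rintro ⟨u, x⟩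
        simp only [mem_filter, Nat.mem_divisorsAntidiagonal, cast0]
        rintro ⟨h, _⟩
        exact ⟨⟨by rw [← h]; ring, by omega⟩, trivial⟩
      · rintro ⟨e, x⟩
        simp only [mem_filter, Nat.mem_divisorsAntidiagonal]
        rintro ⟨⟨h, _⟩, h0⟩
        rw [ZMod.natCast_eq_zero_iff] at h0
        obtain ⟨u, rfl⟩ := h0
        refine ⟨?_, by omega⟩
        rw [Nat.mul_div_cancel_left _ (by norm_num)]
        nlinarith
      · rintro ⟨u, x⟩ _
        simp
      · rintro ⟨e, x⟩
        simp only [mem_filter, Nat.mem_divisorsAntidiagonal]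
        rintro ⟨⟨h, _⟩, h0⟩
        rw [ZMod.natCast_eq_zero_iff] at h0
        obtain ⟨u, rfl⟩ := h0
        simp
      · rintro ⟨u, x⟩ _
        push_cast; ring
    linarith
  · intro a b x y h
    apply G2_id
    rw [← hM]
    have := congrArg (fun z : ℤ => (z : ZMod 3)) h
    push_cast at this ⊢
    exact this

lemma triple (n : ℕ) : ∑ q ∈ antidiagonal n, aa (3 * q.1 + 1) *
    (∑ s ∈ antidiagonal q.2, aa (3 * s.1 + 1) * aa (3 * s.2 + 1)) = ff (n + 1) := by
  have h := step2 n
  simp only [← step1] at h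
  have : ∑ q ∈ antidiagonal n, aa (3 * q.1 + 1) *
    (3 * ∑ s ∈ antidiagonal q.2, aa (3 * s.1 + 1) * aa (3 * s.2 + 1)) =
    3 * ∑ q ∈ antidiagonal n, aa (3 * q.1 + 1) *
    (∑ s ∈ antidiagonal q.2, aa (3 * s.1 + 1) * aa (3 * s.2 + 1)) := by
    rw [Finset.mul_sum]; apply Finset.sum_congr rfl; intros; ring
  rw [this] at h
  linarith

/-! Hecke recursions -/
section hecke
variable (g h : ℕ → ℤ)

def dconv (m : ℕ) : ℤ := ∑ d ∈ m.divisors, g d * h (m / d)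
def qconv (p m : ℕ) : ℤ := ∑ d ∈ m.divisors.filter (fun d => ¬ p ∣ d), g d * h (m / d)

lemma dconv_mul (hg : ∀ a b, g (a * b) = g a * g b) (p m : ℕ) (hp : p.Prime) (hm : m ≠ 0) :
    dconv g h (p * m) = g p * dconv g h m + qconv g h p (p * m) := by
  rw [dconv, ← Finset.sum_filter_add_sum_filter_not _ (fun d => p ∣ d), qconv, dconv,
    Finset.mul_sum]
  congr 1
  symm
  refine Finset.sum_nbij' (fun d => p * d) (fun d => d / p) ?_ ?_ ?_ ?_ ?_
  · intro d hd
    simp only [mem_filter, Nat.mem_divisors] at hd ⊢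
    exact ⟨⟨Nat.mul_dvd_mul_left p hd.1, mul_ne_zero hp.ne_zero hm⟩, dvd_mul_right p d⟩
  · intro d hd
    simp only [mem_filter, Nat.mem_divisors] at hd ⊢
    obtain ⟨⟨h1, h2⟩, e, rfl⟩ := hd
    rw [Nat.mul_div_cancel_left _ hp.pos]
    exact ⟨Nat.dvd_of_mul_dvd_mul_left hp.pos h1, hm⟩
  · intro d hd
    exact Nat.mul_div_cancel_left _ hp.pos
  · intro d hd
    simp only [mem_filter] at hd
    exact Nat.mul_div_cancel' hd.2
  · intro d hd
    rw [hg, Nat.mul_div_mul_left _ _ hp.pos]; ring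

lemma qconv_mul (hh : ∀ a b, h (a * b) = h a * h b) (p m : ℕ) (hp : p.Prime) (hm : m ≠ 0) :
    qconv g h p (p * m) = h p * qconv g h p m := by
  rw [qconv, qconv, Finset.mul_sum]
  have : (p * m).divisors.filter (fun d => ¬ p ∣ d) = m.divisors.filter (fun d => ¬ p ∣ d) := by
    ext d
    simp only [mem_filter, Nat.mem_divisors]
    constructor
    · rintro ⟨⟨h1, h2⟩, h3⟩
      exact ⟨⟨(Nat.Coprime.dvd_mul_left ((Nat.Prime.coprime_iff_not_dvd hp).2 h3).symm).1 h1, hm⟩, h3⟩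
    · rintro ⟨⟨h1, h2⟩, h3⟩
      exact ⟨⟨h1.mul_left p, mul_ne_zero hp.ne_zero hm⟩, h3⟩
  rw [this]
  apply Finset.sum_congr rfl
  intro d hd
  simp only [mem_filter, Nat.mem_divisors] at hd
  rw [Nat.mul_div_assoc _ hd.1.1, hh]; ring

lemma hecke2 (hg : ∀ a b, g (a * b) = g a * g b) (hh : ∀ a b, h (a * b) = h a * h b)
    (p m : ℕ) (hp : p.Prime) (hm : m ≠ 0) :
    dconv g h (p * (p * m)) = (g p + h p) * dconv g h (p * m) - g p * h p * dconv g h m := by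
  rw [dconv_mul g h hg p (p * m) hp (mul_ne_zero hp.ne_zero hm),
    qconv_mul g h hh p (p * m) hp (mul_ne_zero hp.ne_zero hm)]
  have := dconv_mul g h hg p m hp hm
  linear_combination (-h p) * this

lemma hecke1 (hg : ∀ a b, g (a * b) = g a * g b) (hh : ∀ a b, h (a * b) = h a * h b)
    (p m : ℕ) (hp : p.Prime) (hm : m ≠ 0) (hpm : ¬ p ∣ m) :
    dconv g h (p * m) = (g p + h p) * dconv g h m := by
  rw [dconv_mul g h hg p m hp hm, qconv_mul g h hh p m hp hm]
  have : qconv g h p m = dconv g h m := by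
    rw [qconv, dconv, Finset.filter_true_of_mem]
    intro d hd hpd
    exact hpm (hpd.trans (Nat.dvd_of_mem_divisors hd))
  rw [this]; ring
end hecke

lemma c3_mul : ∀ s t : ZMod 3, c3 (s * t) = c3 s * c3 t := by decide

lemma ff_eq (m : ℕ) : ff m = dconv (fun d => (d : ℤ) ^ 2) (fun d => c3 d) m := by
  rw [ff, dconv, Nat.sum_divisorsAntidiagonal (fun a b => (a : ℤ) ^ 2 * c3 (b : ZMod 3))]

lemma aa_eq (m : ℕ) : aa m = dconv (fun d => c3 d) (fun _ => 1) m := by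
  rw [aa, dconv, Nat.sum_divisorsAntidiagonal (fun a b => c3 (a : ZMod 3))]
  simp

lemma ff_rec (p m : ℕ) (hp : p.Prime) (hp3 : p % 3 = 1) (hm : m ≠ 0) :
    ff (p * (p * m)) = ((p : ℤ) ^ 2 + 1) * ff (p * m) - (p : ℤ) ^ 2 * ff m := by
  have hc : c3 (p : ZMod 3) = 1 := by
    have : (p : ZMod 3) = 1 := by
      rw [← Nat.div_add_mod p 3, hp3]; exact cast1 _
    rw [this]; rfl
  have := hecke2 (fun d => (d : ℤ) ^ 2) (fun d => c3 d) (fun a b => by push_cast; ring)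
    (fun a b => by push_cast; exact c3_mul _ _) p m hp hm
  simp only [← ff_eq, hc] at this
  linarith

lemma ff_final (p m k : ℕ) (hp : p.Prime) (hp3 : p % 3 = 1) (hm : m ≠ 0) :
    ((p : ℤ) ^ 2 - 1) * ff (p ^ k * m) + ((p : ℤ) ^ (2 * k) - (p : ℤ) ^ 2) * ff m =
    ((p : ℤ) ^ (2 * k) - 1) * ff (p * m) := by
  induction k using Nat.strong_induction_on with
  | _ k ih =>
    match k with
    | 0 => simp; ring
    | 1 => simp
    | k + 2 =>
      have h1 := ih k (by omega)
      have h2 := ih (k + 1) (by omega)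
      have h3 := ff_rec p (p ^ k * m) hp hp3 (mul_ne_zero (pow_ne_zero _ hp.ne_zero) hm)
      rw [show p * (p * (p ^ k * m)) = p ^ (k + 2) * m by ring,
        show p * (p ^ k * m) = p ^ (k + 1) * m by ring] at h3
      rw [h3]
      linear_combination ((p : ℤ) ^ 2 + 1) * h2 - (p : ℤ) ^ 2 * h1


noncomputable def RR (m : ℕ) : Finset (ℤ × ℤ) :=
  ((Icc (-(2 * m : ℤ)) (2 * m)) ×ˢ (Icc (-(2 * m : ℤ)) (2 * m))).filter
    (fun v => v.1 ^ 2 + v.1 * v.2 + v.2 ^ 2 = m)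

lemma int_bd (A : ℤ) (m : ℕ) (h : 3 * A ^ 2 ≤ 4 * m) : -(2 * m : ℤ) ≤ A ∧ A ≤ 2 * m := by
  have h1 : A ≤ A ^ 2 := Int.le_self_sq A
  have h2 : -A ≤ (-A) ^ 2 := Int.le_self_sq (-A)
  constructor <;> nlinarith

lemma mem_RR {m : ℕ} {A B : ℤ} : (A, B) ∈ RR m ↔ A ^ 2 + A * B + B ^ 2 = m := by
  simp only [RR, mem_filter, mem_product, mem_Icc]
  constructor
  · exact fun h => h.2
  · intro h
    refine ⟨⟨int_bd A m ?_, int_bd B m ?_⟩, h⟩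
    · nlinarith [sq_nonneg (A + 2 * B)]
    · nlinarith [sq_nonneg (2 * A + B)]

/-- multiplication in Eisenstein integers -/
def eim (c d : ℤ) (v : ℤ × ℤ) : ℤ × ℤ := (c * v.1 - d * v.2, c * v.2 + d * v.1 + d * v.2)

lemma eim_norm (c d A B : ℤ) : (eim c d (A, B)).1 ^ 2 + (eim c d (A, B)).1 * (eim c d (A, B)).2
    + (eim c d (A, B)).2 ^ 2 = (c ^ 2 + c * d + d ^ 2) * (A ^ 2 + A * B + B ^ 2) := by
  simp only [eim]; ring

lemma eim_inj (c d : ℤ) (h : c ^ 2 + c * d + d ^ 2 ≠ 0) : Function.Injective (eim c d) := by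
  rintro ⟨A, B⟩ ⟨A', B'⟩ hh
  simp only [eim, Prod.mk.injEq] at hh
  obtain ⟨h1, h2⟩ := hh
  have e1 : (c ^ 2 + c * d + d ^ 2) * A = (c ^ 2 + c * d + d ^ 2) * A' := by
    linear_combination (c + d) * h1 + d * h2
  have e2 : (c ^ 2 + c * d + d ^ 2) * B = (c ^ 2 + c * d + d ^ 2) * B' := by
    linear_combination c * h2 - d * h1
  rw [mul_left_cancel₀ h e1, mul_left_cancel₀ h e2]

lemma eim_mem (c d : ℤ) (p t : ℕ) (h : c ^ 2 + c * d + d ^ 2 = p) (v : ℤ × ℤ) (hv : v ∈ RR t) :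
    eim c d v ∈ RR (p * t) := by
  obtain ⟨A, B⟩ := v
  rw [mem_RR] at hv
  have := eim_norm c d A B
  rw [← Prod.mk.eta (p := eim c d (A, B)), mem_RR, this, h, hv]
  push_cast; rfl

lemma eim_img (c d : ℤ) (p t : ℕ) (hp : p.Prime) (h : c ^ 2 + c * d + d ^ 2 = p) (A B : ℤ)
    (hv : (A, B) ∈ RR (p * t)) (hY : (p : ℤ) ∣ c * B - d * A) :
    (A, B) ∈ (RR t).image (eim c d) := by
  have hpi : Prime (p : ℤ) := Nat.prime_iff_prime_int.1 hp
  have hp0 : (p : ℤ) ≠ 0 := hpi.ne_zero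
  rw [mem_RR] at hv
  have hX : (p : ℤ) ∣ (c + d) * A + d * B := by
    apply hpi.dvd_of_dvd_pow (n := 2)
    have : ((c + d) * A + d * B) ^ 2 = (p : ℤ) * (p * (p * t : ℕ) ) / p
        - (c * B - d * A) * ((c + d) * A + d * B + (c * B - d * A)) := by
      rw [Int.mul_ediv_cancel_left _ hp0, ← h, ← hv]; ring
    rw [this, Int.mul_ediv_cancel_left _ hp0]
    exact dvd_sub (dvd_mul_right _ _) (hY.mul_right _)
  obtain ⟨E, hE⟩ := hX
  obtain ⟨F, hF⟩ := hY
  have hA : A = c * E - d * F := by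
    apply mul_left_cancel₀ hp0
    linear_combination (-A) * h + c * hE - d * hF
  have hB : B = c * F + d * E + d * F := by
    apply mul_left_cancel₀ hp0
    linear_combination (-B) * h + (c + d) * hF + d * hE
  rw [mem_image]
  refine ⟨(E, F), ?_, ?_⟩
  · rw [mem_RR]
    apply mul_left_cancel₀ hp0
    rw [hA, hB] at hv
    push_cast at hv
    rw [← hv, ← h]; ring
  · simp only [eim, Prod.mk.injEq]; exact ⟨hA.symm, hB.symm⟩

lemma RR_mul (p t : ℕ) (c d : ℤ) (hp : p.Prime) (h : c ^ 2 + c * d + d ^ 2 = p) :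
    RR (p * t) = (RR t).image (eim c d) ∪ (RR t).image (eim (c + d) (-d)) := by
  have h' : (c + d) ^ 2 + (c + d) * (-d) + (-d) ^ 2 = p := by rw [← h]; ring
  have hpi : Prime (p : ℤ) := Nat.prime_iff_prime_int.1 hp
  ext ⟨A, B⟩
  rw [mem_union]
  constructor
  · intro hv
    have hv' := mem_RR.1 hv
    have : (p : ℤ) ∣ (c * B - d * A) * ((c + d) * B - (-d) * A) := by
      have e : (c * B - d * A) * ((c + d) * B - (-d) * A) = p * (B ^ 2 - d ^ 2 * t) := by
        push_cast at hv'
        linear_combination B ^ 2 * h - d ^ 2 * hv'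
      rw [e]; exact dvd_mul_right _ _
    rcases hpi.dvd_or_dvd this with h1 | h1
    · left; exact eim_img c d p t hp h A B hv h1
    · right; exact eim_img (c + d) (-d) p t hp h' A B hv h1
  · rintro (hv | hv)
    · rw [mem_image] at hv
      obtain ⟨v, hv, e⟩ := hv
      rw [← e]; exact eim_mem c d p t h v hv
    · rw [mem_image] at hv
      obtain ⟨v, hv, e⟩ := hv
      rw [← e]; exact eim_mem _ _ p t h' v hv

lemma RR_inter (p t : ℕ) (c d : ℤ) (hp : p.Prime) (hp3 : p ≠ 3)
    (h : c ^ 2 + c * d + d ^ 2 = p) (A B : ℤ)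
    (h1 : (A, B) ∈ (RR t).image (eim c d)) (h2 : (A, B) ∈ (RR t).image (eim (c + d) (-d))) :
    (p : ℤ) ∣ A ∧ (p : ℤ) ∣ B := by
  have hpi : Prime (p : ℤ) := Nat.prime_iff_prime_int.1 hp
  rw [mem_image] at h1 h2
  obtain ⟨⟨E, F⟩, _, e1⟩ := h1
  obtain ⟨⟨E', F'⟩, _, e2⟩ := h2
  simp only [eim, Prod.mk.injEq] at e1 e2
  have q1 : (p : ℤ) ∣ (2 * c + d) * A := ⟨E + E', by
    rw [← h]; linear_combination (-(c + d)) * e1.1 - d * e1.2 - c * e2.1 + d * e2.2⟩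
  have q2 : (p : ℤ) ∣ (2 * c + d) * B := ⟨F + F', by
    rw [← h]; linear_combination (-c) * e1.2 + d * e1.1 - d * e2.1 - (c + d) * e2.2⟩
  have q3 : ¬ (p : ℤ) ∣ 2 * c + d := by
    intro q
    have q4 : (p : ℤ) ∣ 3 * d ^ 2 := by
      have : 3 * d ^ 2 = p * 4 - (2 * c + d) * (2 * c + d) := by rw [← h]; ring
      rw [this]; exact dvd_sub (dvd_mul_right _ _) (q.mul_right _)
    have q5 : (p : ℤ) ∣ d := by
      rcases hpi.dvd_or_dvd q4 with q5 | q5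
      · exfalso
        have : p ∣ 3 := by exact_mod_cast q5
        exact hp3 ((Nat.prime_dvd_prime_iff_eq hp Nat.prime_three).1 this)
      · exact hpi.dvd_of_dvd_pow q5
    obtain ⟨u, hu⟩ := q
    obtain ⟨w, hw⟩ := q5
    -- 4p = p²(u²+3w²)
    have e : (p : ℤ) * (p * (u ^ 2 + 3 * w ^ 2)) = p * 4 := by
      have : (2 * c + d) ^ 2 + 3 * d ^ 2 = 4 * p := by rw [← h]; ring
      rw [hu, hw] at this
      linear_combination this
    have e' := mul_left_cancel₀ hpi.ne_zero e
    have h4 : (p : ℤ) ∣ 4 := ⟨_, e'.symm⟩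
    have h4' : p ∣ 2 ^ 2 := by exact_mod_cast h4
    have hp2 : p = 2 := (Nat.prime_dvd_prime_iff_eq hp Nat.prime_two).1 (hp.dvd_of_dvd_pow h4')
    subst hp2
    -- c^2+cd+d^2 = 2 impossible
    have hm : (c ^ 2 + c * d + d ^ 2) % 4 = 2 := by rw [h]; rfl
    have hc : c % 4 = 0 ∨ c % 4 = 1 ∨ c % 4 = 2 ∨ c % 4 = 3 := by omega
    have hd : d % 4 = 0 ∨ d % 4 = 1 ∨ d % 4 = 2 ∨ d % 4 = 3 := by omega
    rcases hc with hc | hc | hc | hc <;> rcases hd with hd | hd | hd | hd <;>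
      simp [pow_two, Int.add_emod, Int.mul_emod, hc, hd] at hm
  exact ⟨(hpi.dvd_or_dvd q1).resolve_left q3, (hpi.dvd_or_dvd q2).resolve_left q3⟩

lemma RR_split2 (p t : ℕ) (c d : ℤ) (hp : p.Prime) (hp3 : p ≠ 3)
    (h : c ^ 2 + c * d + d ^ 2 = p) :
    (RR (p * (p * t))).card + (RR t).card = 2 * (RR (p * t)).card := by
  have h' : (c + d) ^ 2 + (c + d) * (-d) + (-d) ^ 2 = p := by rw [← h]; ring
  have hp0 : (p : ℤ) ≠ 0 := by exact_mod_cast hp.ne_zero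
  have hi : (RR (p * t)).image (eim c d) ∩ (RR (p * t)).image (eim (c + d) (-d)) =
      (RR t).image (eim p 0) := by
    ext ⟨A, B⟩
    constructor
    · intro hv
      rw [mem_inter] at hv
      obtain ⟨⟨E, hE⟩, F, hF⟩ := RR_inter p (p * t) c d hp hp3 h A B hv.1 hv.2
      have hm : (A, B) ∈ RR (p * (p * t)) := by
        rw [RR_mul p (p * t) c d hp h]; exact mem_union_left _ hv.1
      rw [mem_RR] at hm
      rw [mem_image]
      refine ⟨(E, F), ?_, ?_⟩
      · rw [mem_RR]
        rw [hE, hF] at hm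
        apply mul_left_cancel₀ hp0
        apply mul_left_cancel₀ hp0
        push_cast at hm
        linear_combination hm
      · simp [eim, hE, hF]
    · intro hv
      rw [mem_image] at hv
      obtain ⟨⟨E, F⟩, hv, e⟩ := hv
      rw [mem_inter, mem_image, mem_image]
      refine ⟨⟨eim (c + d) (-d) (E, F), eim_mem _ _ p t h' _ hv, ?_⟩,
        eim c d (E, F), eim_mem _ _ p t h _ hv, ?_⟩
      · rw [← e]
        simp only [eim, Prod.mk.injEq, ← h]; constructor <;> ring
      · rw [← e]
        simp only [eim, Prod.mk.injEq, ← h]; constructor <;> ring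
  have := card_union_add_card_inter ((RR (p * t)).image (eim c d))
    ((RR (p * t)).image (eim (c + d) (-d)))
  have i1 := card_image_of_injective (RR (p * t)) (eim_inj c d (by rw [h]; exact hp0))
  have i2 := card_image_of_injective (RR (p * t)) (eim_inj (c + d) (-d) (by rw [h']; exact hp0))
  have i3 := card_image_of_injective (RR t) (eim_inj (p : ℤ) 0 (by simpa using hp0))
  rw [hi, ← RR_mul p (p * t) c d hp h, i1, i2, i3] at this
  omega

lemma RR_split1 (p t : ℕ) (c d : ℤ) (hp : p.Prime) (hp3 : p ≠ 3) (ht : ¬ p ∣ t)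
    (h : c ^ 2 + c * d + d ^ 2 = p) :
    (RR (p * t)).card = 2 * (RR t).card := by
  have h' : (c + d) ^ 2 + (c + d) * (-d) + (-d) ^ 2 = p := by rw [← h]; ring
  have hp0 : (p : ℤ) ≠ 0 := by exact_mod_cast hp.ne_zero
  have hi : Disjoint ((RR t).image (eim c d)) ((RR t).image (eim (c + d) (-d))) := by
    rw [Finset.disjoint_left]
    rintro ⟨A, B⟩ h1 h2
    obtain ⟨⟨E, hE⟩, F, hF⟩ := RR_inter p t c d hp hp3 h A B h1 h2
    have hm : (A, B) ∈ RR (p * t) := by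
      rw [RR_mul p t c d hp h]; exact mem_union_left _ h1
    rw [mem_RR, hE, hF] at hm
    apply ht
    have : (p : ℤ) ∣ t := ⟨E ^ 2 + E * F + F ^ 2, by
      apply mul_left_cancel₀ hp0
      push_cast at hm
      linear_combination -hm⟩
    exact_mod_cast this
  rw [RR_mul p t c d hp h, card_union_of_disjoint hi,
    card_image_of_injective _ (eim_inj _ _ (by rw [h]; exact hp0)),
    card_image_of_injective _ (eim_inj _ _ (by rw [h']; exact hp0))]
  omega

lemma RR_three (t : ℕ) : (RR (3 * t)).card = (RR t).card := by
  have h : (1 : ℤ) ^ 2 + 1 * 1 + 1 ^ 2 = (3 : ℕ) := by norm_num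
  have : RR (3 * t) = (RR t).image (eim 1 1) := by
    ext ⟨A, B⟩
    constructor
    · intro hv
      apply eim_img 1 1 3 t Nat.prime_three h A B hv
      have hv' := mem_RR.1 hv
      have hpi : Prime (3 : ℤ) := Int.prime_three
      apply hpi.dvd_of_dvd_pow (n := 2)
      push_cast at hv'
      exact ⟨t - A * B, by linear_combination hv'⟩
    · intro hv
      rw [mem_image] at hv
      obtain ⟨v, hv, e⟩ := hv
      rw [← e]; exact eim_mem _ _ 3 t h v hv
  rw [this, card_image_of_injective _ (eim_inj _ _ (by norm_num))]


lemma inert_dvd (p : ℕ) (hp : p.Prime) (hp3 : p % 3 = 2) (A B : ℤ)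
    (h : (p : ℤ) ∣ A ^ 2 + A * B + B ^ 2) : (p : ℤ) ∣ A ∧ (p : ℤ) ∣ B := by
  have : Fact p.Prime := ⟨hp⟩
  have hpi : Prime (p : ℤ) := Nat.prime_iff_prime_int.1 hp
  have hB : (p : ℤ) ∣ B := by
    by_contra hB
    have hB' : (B : ZMod p) ≠ 0 := by rwa [Ne, ZMod.intCast_zmod_eq_zero_iff_dvd]
    have h0 : (A : ZMod p) ^ 2 + A * B + B ^ 2 = 0 := by
      have := (ZMod.intCast_zmod_eq_zero_iff_dvd _ p).2 h
      push_cast at this; exact this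
    set w : ZMod p := A / B with hw
    have hA : (A : ZMod p) = w * B := by rw [hw]; field_simp
    have hw1 : w ^ 2 + w + 1 = 0 := by
      have : (w ^ 2 + w + 1) * (B : ZMod p) ^ 2 = 0 := by rw [← h0, hA]; ring
      exact (mul_eq_zero.1 this).resolve_right (pow_ne_zero 2 hB')
    have hw3 : w ^ 3 = 1 := by linear_combination (w - 1) * hw1
    have hwn : w ≠ 1 := by
      intro e
      rw [e] at hw1
      have : ((3 : ℕ) : ZMod p) = 0 := by push_cast; linear_combination hw1
      rw [ZMod.natCast_eq_zero_iff] at this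
      have := (Nat.prime_dvd_prime_iff_eq hp Nat.prime_three).1 this
      omega
    have ho : orderOf w = 3 := orderOf_eq_prime hw3 hwn
    have hw0 : w ≠ 0 := by
      intro e; rw [e] at hw3; simp at hw3
    have := ZMod.orderOf_dvd_card_sub_one hw0
    rw [ho] at this
    have := hp.one_lt
    omega
  refine ⟨?_, hB⟩
  apply hpi.dvd_of_dvd_pow (n := 2)
  have : A ^ 2 = (A ^ 2 + A * B + B ^ 2) - B * (A + B) := by ring
  rw [this]
  exact dvd_sub h (hB.mul_right _)

lemma RR_inert1 (p t : ℕ) (hp : p.Prime) (hp3 : p % 3 = 2) (ht : ¬ p ∣ t) :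
    (RR (p * t)).card = 0 := by
  rw [card_eq_zero, eq_empty_iff_forall_notMem]
  rintro ⟨A, B⟩ hm
  rw [mem_RR] at hm
  have hp0 : (p : ℤ) ≠ 0 := by exact_mod_cast hp.ne_zero
  obtain ⟨⟨E, hE⟩, F, hF⟩ := inert_dvd p hp hp3 A B (by rw [hm]; push_cast; exact dvd_mul_right _ _)
  apply ht
  have : (p : ℤ) ∣ t := ⟨E ^ 2 + E * F + F ^ 2, by
      apply mul_left_cancel₀ hp0
      rw [hE, hF] at hm
      push_cast at hm
      linear_combination -hm⟩
  exact_mod_cast this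

lemma RR_inert2 (p t : ℕ) (hp : p.Prime) (hp3 : p % 3 = 2) :
    (RR (p * (p * t))).card = (RR t).card := by
  have hp0 : (p : ℤ) ≠ 0 := by exact_mod_cast hp.ne_zero
  have : RR (p * (p * t)) = (RR t).image (eim p 0) := by
    ext ⟨A, B⟩
    rw [mem_RR, mem_image]
    constructor
    · intro hm
      obtain ⟨⟨E, hE⟩, F, hF⟩ := inert_dvd p hp hp3 A B
        (by rw [hm]; push_cast; exact dvd_mul_right _ _)
      refine ⟨(E, F), ?_, ?_⟩
      · rw [mem_RR]
        rw [hE, hF] at hm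
        apply mul_left_cancel₀ hp0
        apply mul_left_cancel₀ hp0
        push_cast at hm
        linear_combination hm
      · simp [eim, hE, hF]
    · rintro ⟨⟨E, F⟩, hv, e⟩
      rw [mem_RR] at hv
      simp only [eim, Prod.mk.injEq] at e
      rw [← e.1, ← e.2]
      push_cast
      linear_combination (p : ℤ) ^ 2 * hv
  rw [this, card_image_of_injective (RR t) (eim_inj (p : ℤ) 0 (by simpa using hp0))]

lemma exists_rep (p : ℕ) (hp : p.Prime) (hp3 : p % 3 = 1) :
    ∃ c d : ℤ, c ^ 2 + c * d + d ^ 2 = p := by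
  have : Fact p.Prime := ⟨hp⟩
  have hz : ∃ z : ZMod p, z ^ 2 + z + 1 = 0 := by
    have : Fact (Nat.Prime 3) := ⟨Nat.prime_three⟩
    have : 3 ∣ Fintype.card (ZMod p)ˣ := by
      rw [ZMod.card_units]; omega
    obtain ⟨x, hx⟩ := exists_prime_orderOf_dvd_card 3 this
    have h3 : x ^ 3 = 1 := by rw [← hx]; exact pow_orderOf_eq_one x
    have h1 : x ≠ 1 := by
      intro e; rw [e, orderOf_one] at hx; omega
    refine ⟨x, ?_⟩
    have h3' : (x : ZMod p) ^ 3 = 1 := by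
      rw [← Units.val_pow_eq_pow_val, h3, Units.val_one]
    have h1' : (x : ZMod p) - 1 ≠ 0 := by
      rw [sub_ne_zero]; intro e; exact h1 (Units.ext e)
    have : ((x : ZMod p) - 1) * ((x : ZMod p) ^ 2 + x + 1) = 0 := by linear_combination h3'
    exact (mul_eq_zero.1 this).resolve_left h1'
  obtain ⟨z, hz⟩ := hz
  set k := Nat.sqrt p with hk
  have hk1 : k * k ≤ p := Nat.sqrt_le p
  have hk2 : p < (k + 1) * (k + 1) := Nat.lt_succ_sqrt p
  have hk3 : k * k < p := by
    rcases hk1.lt_or_eq with h | h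
    · exact h
    · exfalso
      have hk1' : k ≠ 1 := by
        intro e; rw [e] at h; have := hp.one_lt; omega
      rw [← h] at hp
      exact Nat.not_prime_mul hk1' hk1' hp
  have := Finset.exists_ne_map_eq_of_card_lt_of_maps_to
    (s := range (k + 1) ×ˢ range (k + 1)) (t := (univ : Finset (ZMod p)))
    (f := fun v => (v.1 : ZMod p) - z * v.2)
    (by rw [card_product, card_range, card_univ, ZMod.card]; exact hk2) (fun _ _ => mem_univ _)
  obtain ⟨⟨a, b⟩, h1, ⟨a', b'⟩, h2, hne, he⟩ := this
  simp only [mem_product, mem_range] at h1 h2 he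
  set x : ℤ := (a : ℤ) - a' with hx
  set y : ℤ := (b : ℤ) - b' with hy
  have hxk : x ^ 2 ≤ (k : ℤ) * k := by
    have l1 : -(k : ℤ) ≤ x := by omega
    have l2 : x ≤ k := by omega
    nlinarith
  have hyk : y ^ 2 ≤ (k : ℤ) * k := by
    have l1 : -(k : ℤ) ≤ y := by omega
    have l2 : y ≤ k := by omega
    nlinarith
  have hk3' : (k : ℤ) * k < p := by exact_mod_cast hk3
  have hd : (p : ℤ) ∣ x ^ 2 + x * y + y ^ 2 := by
    rw [← ZMod.intCast_zmod_eq_zero_iff_dvd]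
    have e : (x : ZMod p) = z * y := by
      rw [hx, hy]; push_cast; linear_combination he
    push_cast; rw [e]; linear_combination (y : ZMod p) ^ 2 * hz
  have hpos : 0 < x ^ 2 + x * y + y ^ 2 := by
    by_contra hn
    have hy0 : y = 0 := by
      have : y ^ 2 = 0 := by nlinarith [sq_nonneg (2 * x + y), sq_nonneg y]
      exact pow_eq_zero_iff (two_ne_zero) |>.1 this
    have hx0 : x = 0 := by
      have : x ^ 2 = 0 := by nlinarith [sq_nonneg (2 * y + x), sq_nonneg x]
      exact pow_eq_zero_iff (two_ne_zero) |>.1 this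
    apply hne
    rw [Prod.mk.injEq]; omega
  obtain ⟨q, hq⟩ := hd
  have hp0 : (0 : ℤ) < p := by exact_mod_cast hp.pos
  have hq0 : 0 < q := by
    rw [hq] at hpos; exact pos_of_mul_pos_right hpos hp0.le
  have hq3 : q < 3 := by
    have : (p : ℤ) * q < p * 3 := by rw [← hq]; nlinarith [sq_nonneg (x - y)]
    exact lt_of_mul_lt_mul_left this hp0.le
  have : q = 1 ∨ q = 2 := by omega
  rcases this with rfl | rfl
  · exact ⟨x, y, by rw [hq]; ring⟩
  · exfalso
    have hp2 : p % 2 = 1 := by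
      rcases hp.eq_two_or_odd with h | h
      · rw [h] at hp3; omega
      · exact h
    have hm : (x ^ 2 + x * y + y ^ 2) % 4 = 2 := by rw [hq]; omega
    have hc : x % 4 = 0 ∨ x % 4 = 1 ∨ x % 4 = 2 ∨ x % 4 = 3 := by omega
    have hd : y % 4 = 0 ∨ y % 4 = 1 ∨ y % 4 = 2 ∨ y % 4 = 3 := by omega
    rcases hc with hc | hc | hc | hc <;> rcases hd with hd | hd | hd | hd <;>
      simp [pow_two, Int.add_emod, Int.mul_emod, hc, hd] at hm

lemma aa_h1 (p m : ℕ) (hp : p.Prime) (hm : m ≠ 0) (hpm : ¬ p ∣ m) :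
    aa (p * m) = (c3 p + 1) * aa m := by
  simp only [aa_eq]
  exact hecke1 (fun d => c3 d) (fun _ => 1) (fun a b => by push_cast; exact c3_mul _ _)
    (fun a b => by simp) p m hp hm hpm

lemma aa_h2 (p m : ℕ) (hp : p.Prime) (hm : m ≠ 0) :
    aa (p * (p * m)) = (c3 p + 1) * aa (p * m) - c3 p * aa m := by
  simp only [aa_eq]
  have := hecke2 (fun d => c3 d) (fun _ => 1) (fun a b => by push_cast; exact c3_mul _ _)
    (fun a b => by simp) p m hp hm
  rw [this]; ring

lemma RR_one : (RR 1).card = 6 := by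
  have : RR 1 = {(1, 0), (0, 1), (-1, 0), (0, -1), (1, -1), (-1, 1)} := by
    unfold RR; decide
  rw [this]; decide

lemma RR_card (m : ℕ) (hm : m ≠ 0) : ((RR m).card : ℤ) = 6 * aa m := by
  induction m using Nat.strong_induction_on with
  | _ m ih =>
  by_cases h1 : m = 1
  · subst h1; rw [RR_one]; decide
  obtain ⟨p, hp, t, rfl⟩ := Nat.exists_prime_and_dvd h1
  have ht0 : t ≠ 0 := by rintro rfl; simp at hm
  have htlt : t < p * t := by nlinarith [hp.two_le, Nat.pos_of_ne_zero ht0]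
  have iht := ih t htlt ht0
  have h3 : p % 3 = 0 ∨ p % 3 = 1 ∨ p % 3 = 2 := by omega
  rcases h3 with h3 | h3 | h3
  · have : p = 3 := ((Nat.prime_dvd_prime_iff_eq Nat.prime_three hp).1
      (Nat.dvd_of_mod_eq_zero h3)).symm
    subst this
    have hc : c3 ((3 : ℕ) : ZMod 3) = 0 := by decide
    rw [RR_three, iht]
    by_cases hd : 3 ∣ t
    · obtain ⟨s, rfl⟩ := hd
      rw [aa_h2 3 s hp (by rintro rfl; simp at ht0), hc]; ring
    · rw [aa_h1 3 t hp ht0 hd, hc]; ring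
  · obtain ⟨c, d, hcd⟩ := exists_rep p hp h3
    have hc : c3 (p : ZMod 3) = 1 := by
      have : (p : ZMod 3) = 1 := by
        have := cast1 (p / 3); rwa [show 3 * (p / 3) + 1 = p by omega] at this
      rw [this]; decide
    have hpne : p ≠ 3 := by omega
    by_cases hd : p ∣ t
    · obtain ⟨s, rfl⟩ := hd
      have hs0 : s ≠ 0 := by rintro rfl; simp at ht0
      have ihs := ih s (lt_trans (by nlinarith [hp.two_le, Nat.pos_of_ne_zero hs0]) htlt) hs0
      have := RR_split2 p s c d hp hpne hcd
      rw [aa_h2 p s hp hs0, hc]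
      have : ((RR (p * (p * s))).card : ℤ) + (RR s).card = 2 * (RR (p * s)).card := by
        exact_mod_cast this
      linarith
    · have := RR_split1 p t c d hp hpne hd hcd
      rw [aa_h1 p t hp ht0 hd, hc, this]; push_cast; linarith
  · have hc : c3 (p : ZMod 3) = -1 := by
      have : (p : ZMod 3) = 2 := by
        have := cast2 (p / 3); rwa [show 3 * (p / 3) + 2 = p by omega] at this
      rw [this]; decide
    by_cases hd : p ∣ t
    · obtain ⟨s, rfl⟩ := hd
      have hs0 : s ≠ 0 := by rintro rfl; simp at ht0
      have ihs := ih s (lt_trans (by nlinarith [hp.two_le, Nat.pos_of_ne_zero hs0]) htlt) hs0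
      rw [aa_h2 p s hp hs0, hc, RR_inert2 p s hp h3]; linarith
    · rw [aa_h1 p t hp ht0 hd, hc, RR_inert1 p t hp h3 hd]; simp


def QQ (n : ℕ) : Finset (ℕ × ℕ) :=
  ((range (2 * n + 1)) ×ˢ (range (2 * n + 1))).filter
    (fun v => v.1 ^ 2 + v.2 ^ 2 + v.2 = n + v.1 * v.2)

lemma mem_QQ {n r s : ℕ} : (r, s) ∈ QQ n ↔ r ^ 2 + s ^ 2 + s = n + r * s := by
  simp only [QQ, mem_filter, mem_product, mem_range]
  constructor
  · exact fun h => h.2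
  · intro h
    refine ⟨?_, h⟩
    zify at h
    have h1 := int_bd (r : ℤ) n (by nlinarith [sq_nonneg ((r : ℤ) - 2 * s)])
    have h2 := int_bd (s : ℤ) n (by nlinarith [sq_nonneg (2 * (r : ℤ) - s)])
    omega

def UU : Finset (ℤ × ℤ) := {(1, 0), (0, 1), (-1, 0), (0, -1), (1, -1), (-1, 1)}

lemma UU_cases {u : ℤ × ℤ} (h : u ∈ UU) : u = (1, 0) ∨ u = (0, 1) ∨ u = (-1, 0) ∨ u = (0, -1) ∨
    u = (1, -1) ∨ u = (-1, 1) := by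
  simpa [UU] using h

lemma sector (A B : ℤ) (h : (A - B) % 3 ≠ 0) : ∃ r s : ℕ, ∃ u ∈ UU,
    eim u.1 u.2 (2 * s - r + 1, 2 * r - s) = (A, B) := by
  have key : ∀ a b : ℤ, (a - b) % 3 = 1 → 2 ≤ 2 * a + b → 1 ≤ a + 2 * b →
      ∃ r s : ℕ, (2 * s - r + 1 : ℤ) = a ∧ (2 * r - s : ℤ) = b := by
    intro a b h1 h2 h3
    refine ⟨((a + 2 * b - 1) / 3).toNat, ((2 * a + b - 2) / 3).toNat, ?_, ?_⟩ <;> omega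
  have fin : ∀ (a b : ℤ) (u : ℤ × ℤ), u ∈ UU → eim u.1 u.2 (a, b) = (A, B) →
      (a - b) % 3 = 1 → 2 ≤ 2 * a + b → 1 ≤ a + 2 * b → ∃ r s : ℕ, ∃ u ∈ UU,
    eim u.1 u.2 (2 * s - r + 1, 2 * r - s) = (A, B) := by
    intro a b u hu he h1 h2 h3
    obtain ⟨r, s, e1, e2⟩ := key a b h1 h2 h3
    exact ⟨r, s, u, hu, by rw [e1, e2]; exact he⟩
  by_cases c1 : (A - B) % 3 = 1
  · by_cases d1 : 2 ≤ 2 * A + B ∧ 1 ≤ A + 2 * B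
    · exact fin A B (1, 0) (by decide) (by simp [eim]) (by omega) (by omega) (by omega)
    by_cases d2 : 2 ≤ 2 * B + (-A - B) ∧ 1 ≤ B + 2 * (-A - B)
    · exact fin B (-A - B) (-1, 1) (by decide) (by simp [eim]; ring) (by omega) (by omega) (by omega)
    · exact fin (-A - B) A (0, -1) (by decide) (by simp [eim]) (by omega) (by omega) (by omega)
  · by_cases d1 : 2 ≤ 2 * (-A) + (-B) ∧ 1 ≤ (-A) + 2 * (-B)
    · exact fin (-A) (-B) (-1, 0) (by decide) (by simp [eim]) (by omega) (by omega) (by omega)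
    by_cases d2 : 2 ≤ 2 * (-B) + (A + B) ∧ 1 ≤ (-B) + 2 * (A + B)
    · exact fin (-B) (A + B) (1, -1) (by decide) (by simp [eim]) (by omega) (by omega) (by omega)
    · exact fin (A + B) (-A) (0, 1) (by decide) (by simp [eim]) (by omega) (by omega) (by omega)

lemma UU_norm {u : ℤ × ℤ} (h : u ∈ UU) : u.1 ^ 2 + u.1 * u.2 + u.2 ^ 2 = 1 := by
  rcases UU_cases h with rfl | rfl | rfl | rfl | rfl | rfl <;> norm_num

lemma QQ_card6 (n : ℕ) : (QQ n).card * 6 = (RR (3 * n + 1)).card := by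
  have hU : UU.card = 6 := by decide
  rw [← hU, ← card_product]
  apply card_nbij (fun w : (ℕ × ℕ) × (ℤ × ℤ) =>
    eim w.2.1 w.2.2 (2 * (w.1.2 : ℤ) - w.1.1 + 1, 2 * (w.1.1 : ℤ) - w.1.2))
  · rintro ⟨⟨r, s⟩, u⟩ h
    rw [mem_coe, mem_product, mem_QQ] at h
    obtain ⟨h1, h2⟩ := h
    have hn := eim_norm u.1 u.2 (2 * (s : ℤ) - r + 1) (2 * (r : ℤ) - s)
    rw [UU_norm h2] at hn
    change eim u.1 u.2 (2 * (s : ℤ) - r + 1, 2 * (r : ℤ) - s) ∈ RR (3 * n + 1)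
    rw [← Prod.mk.eta (p := eim _ _ _), mem_RR, hn]
    zify at h1
    push_cast
    linear_combination 3 * h1
  · rintro ⟨⟨r, s⟩, u⟩ h ⟨⟨r', s'⟩, u'⟩ h' e
    rw [mem_coe, mem_product] at h h'
    rcases UU_cases h.2 with hu | hu | hu | hu | hu | hu <;>
    rcases UU_cases h'.2 with hu' | hu' | hu' | hu' | hu' | hu' <;>
    · simp only at hu hu'
      subst hu; subst hu'
      simp only [eim, Prod.mk.injEq] at e ⊢
      first
      | (exfalso; omega)
      | exact ⟨⟨by omega, by omega⟩, by simp⟩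
  · rintro ⟨A, B⟩ h
    rw [mem_coe, mem_RR] at h
    have h3 : (A - B) % 3 ≠ 0 := by
      intro h3
      obtain ⟨q, hq⟩ := Int.dvd_of_emod_eq_zero h3
      have hA : A = B + 3 * q := by linarith
      rw [hA] at h
      have : (3 : ℤ) * (B ^ 2 + 3 * B * q + 3 * q ^ 2 - n) = 1 := by
        push_cast at h; linear_combination h
      omega
    obtain ⟨r, s, u, hu, he⟩ := sector A B h3
    refine ⟨((r, s), u), ?_, he⟩
    rw [mem_coe, mem_product, mem_QQ]
    refine ⟨?_, hu⟩
    have hn := eim_norm u.1 u.2 (2 * (s : ℤ) - r + 1) (2 * (r : ℤ) - s)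
    rw [UU_norm hu, he] at hn
    simp only at hn
    rw [h] at hn
    push_cast at hn
    zify
    linarith

lemma QQ_card (n : ℕ) : ((QQ n).card : ℤ) = aa (3 * n + 1) := by
  have h1 := QQ_card6 n
  have h2 := RR_card (3 * n + 1) (by omega)
  rw [← h1] at h2
  push_cast at h2
  linarith


lemma yd_iff (μ : YoungDiagram) (i j : ℕ) : i < μ.colLen j ↔ j < μ.rowLen i := by
  rw [← YoungDiagram.mem_iff_lt_colLen, ← YoungDiagram.mem_iff_lt_rowLen]

lemma yd_ext (μ ν : YoungDiagram) (h : ∀ i, μ.rowLen i = ν.rowLen i) : μ = ν := by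
  apply YoungDiagram.ext
  ext ⟨i, j⟩
  rw [YoungDiagram.mem_cells, YoungDiagram.mem_cells, YoungDiagram.mem_iff_lt_rowLen,
    YoungDiagram.mem_iff_lt_rowLen, h]

lemma yd_exists (f : ℕ → ℕ) (l : ℕ) (hf : ∀ i j, i ≤ j → f j ≤ f i) (hl : ∀ i, l ≤ i → f i = 0) :
    ∃ μ : YoungDiagram, ∀ i, μ.rowLen i = f i := by
  refine ⟨⟨((range l) ×ˢ (range (f 0))).filter (fun c => c.2 < f c.1), ?_⟩, ?_⟩
  · rintro ⟨a, b⟩ ⟨c, d⟩ hle h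
    rw [Prod.mk_le_mk] at hle
    simp only [coe_filter, mem_product, mem_range, Set.mem_ofPred_eq] at h ⊢
    have := hf c a hle.1
    omega
  · intro i
    have key : ∀ j, j < YoungDiagram.rowLen ⟨((range l) ×ˢ (range (f 0))).filter
        (fun c => c.2 < f c.1), by
          rintro ⟨a, b⟩ ⟨c, d⟩ hle h
          rw [Prod.mk_le_mk] at hle
          simp only [coe_filter, mem_product, mem_range, Set.mem_ofPred_eq] at h ⊢
          have := hf c a hle.1
          omega⟩ i ↔ j < f i := by
      intro j
      rw [← YoungDiagram.mem_iff_lt_rowLen, ← YoungDiagram.mem_cells]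
      simp only [mem_filter, mem_product, mem_range]
      have := hf 0 i (Nat.zero_le _)
      constructor
      · exact fun h => h.2
      · intro h
        refine ⟨⟨?_, by omega⟩, h⟩
        by_contra hc
        have := hl i (by omega)
        omega
    exact eq_of_forall_lt_iff key

def beads (μ : YoungDiagram) : Finset ℕ :=
  (range (μ.colLen 0)).image (fun k => μ.rowLen (μ.colLen 0 - 1 - k) + k)

lemma bead_mono (μ : YoungDiagram) (k k' : ℕ) (h : k < k') :
    μ.rowLen (μ.colLen 0 - 1 - k) + k < μ.rowLen (μ.colLen 0 - 1 - k') + k' := by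
  have := μ.rowLen_anti (μ.colLen 0 - 1 - k') (μ.colLen 0 - 1 - k) (by omega)
  omega

lemma bead_injf (μ : YoungDiagram) :
    Function.Injective (fun k => μ.rowLen (μ.colLen 0 - 1 - k) + k) :=
  StrictMono.injective (fun _ _ h => bead_mono μ _ _ h)

lemma bead_card (μ : YoungDiagram) : (beads μ).card = μ.colLen 0 := by
  rw [beads, card_image_of_injective _ (bead_injf μ), card_range]

lemma mem_beads (μ : YoungDiagram) (x : ℕ) : x ∈ beads μ ↔
    ∃ i < μ.colLen 0, x + i + 1 = μ.rowLen i + μ.colLen 0 := by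
  rw [beads, mem_image]
  constructor
  · rintro ⟨k, hk, e⟩
    rw [mem_range] at hk
    exact ⟨μ.colLen 0 - 1 - k, by omega, by omega⟩
  · rintro ⟨i, hi, e⟩
    refine ⟨μ.colLen 0 - 1 - i, by rw [mem_range]; omega, ?_⟩
    have : μ.colLen 0 - 1 - (μ.colLen 0 - 1 - i) = i := by omega
    simp only [this]; omega

lemma beads_zero (μ : YoungDiagram) : 0 ∉ beads μ := by
  rw [mem_beads]
  rintro ⟨i, hi, e⟩
  have := (yd_iff μ i 0).1 hi
  omega

lemma beads_inj (μ ν : YoungDiagram) (h : beads μ = beads ν) : μ = ν := by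
  have hl : μ.colLen 0 = ν.colLen 0 := by rw [← bead_card, ← bead_card, h]
  have e1 := orderEmbOfFin_unique (s := beads μ) (k := μ.colLen 0) (bead_card μ)
    (f := fun k => μ.rowLen (μ.colLen 0 - 1 - k) + k)
    (fun k => mem_image.2 ⟨k, mem_range.2 k.2, rfl⟩) (fun a b hab => bead_mono μ a b hab)
  have e2 := orderEmbOfFin_unique (s := beads μ) (k := μ.colLen 0) (bead_card μ)
    (f := fun k => ν.rowLen (ν.colLen 0 - 1 - k) + k)
    (fun k => by
      rw [h]; exact mem_image.2 ⟨k, mem_range.2 (hl ▸ k.2), rfl⟩) (fun a b hab => bead_mono ν a b hab)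
  apply yd_ext
  intro i
  by_cases hi : i < μ.colLen 0
  · have := congrFun (e1.trans e2.symm) ⟨μ.colLen 0 - 1 - i, by omega⟩
    simp only at this
    rw [← hl, show μ.colLen 0 - 1 - (μ.colLen 0 - 1 - i) = i by omega] at this
    omega
  · have h1 := yd_iff μ i 0
    have h2 := yd_iff ν i 0
    omega

lemma beads_surj (B : Finset ℕ) (h0 : 0 ∉ B) : ∃ μ : YoungDiagram, beads μ = B := by
  set l := B.card with hl
  set e := B.orderEmbOfFin hl.symm with he
  set g : ℕ → ℕ := fun k => if h : k < l then e ⟨k, h⟩ else 0 with hg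
  have gm : ∀ k, k < l → g k ∈ B := by
    intro k hk; simp only [hg, hk, dif_pos]; exact orderEmbOfFin_mem _ _ _
  have gs : ∀ k d, k + d < l → g k + d ≤ g (k + d) := by
    intro k d
    induction d with
    | zero => intro _; simp
    | succ d ih =>
      intro hd
      have h1 := ih (by omega)
      have h2 : g (k + d) < g (k + (d + 1)) := by
        simp only [hg, hd, show k + d < l by omega, dif_pos]
        exact e.strictMono (by rw [Fin.mk_lt_mk]; omega)
      omega
  have g0 : ∀ k, k < l → k + 1 ≤ g k := by
    intro k hk
    have h1 := gs 0 k (by omega)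
    have h2 : g 0 ≠ 0 := fun hh => h0 (hh ▸ gm 0 (by omega))
    rw [Nat.zero_add] at h1
    omega
  obtain ⟨μ, hμ⟩ := yd_exists (fun i => if i < l then g (l - 1 - i) - (l - 1 - i) else 0) l
    (by
      intro i j hij
      by_cases hj : j < l
      · have h1 := gs (l - 1 - j) (j - i) (by omega)
        rw [show l - 1 - j + (j - i) = l - 1 - i by omega] at h1
        simp only [hj, show i < l by omega, if_true]
        omega
      · simp [hj])
    (by intro i hi; rw [if_neg (by omega)])
  have hc : μ.colLen 0 = l := by
    apply eq_of_forall_lt_iff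
    intro i
    rw [yd_iff, hμ]
    by_cases hi : i < l
    · have := g0 (l - 1 - i) (by omega)
      simp only [hi, if_true, iff_true]; omega
    · simp [hi]
  refine ⟨μ, ?_⟩
  apply eq_of_subset_of_card_le
  · intro x hx
    rw [mem_beads, hc] at hx
    obtain ⟨i, hi, ex⟩ := hx
    rw [hμ, if_pos hi] at ex
    have := g0 (l - 1 - i) (by omega)
    have : x = g (l - 1 - i) := by omega
    rw [this]; exact gm _ (by omega)
  · rw [bead_card, hc]

lemma core_iff (μ : YoungDiagram) : μ.IsThreeCore ↔
    ∀ b ∈ beads μ, ∀ x, x < b → 3 ∣ b - x → x ∈ beads μ := by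
  constructor
  · intro h b hb x hx hd
    by_contra hn
    rw [mem_beads] at hb
    obtain ⟨i, hi, e⟩ := hb
    have ex : ∃ k, μ.rowLen k + μ.colLen 0 ≤ x + k + 1 :=
      ⟨μ.rowLen 0 + μ.colLen 0, by have := μ.rowLen_anti 0 (μ.rowLen 0 + μ.colLen 0) (by omega); omega⟩
    classical
    set k := Nat.find ex with hk
    have hk1 : μ.rowLen k + μ.colLen 0 ≤ x + k + 1 := Nat.find_spec ex
    have hk2 : ∀ k' < k, x + k' + 1 < μ.rowLen k' + μ.colLen 0 := fun k' h' => by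
      have := Nat.find_min ex h'; omega
    have hik : i < k := by
      by_contra hc
      have := μ.rowLen_anti k i (by omega)
      omega
    have hkl : k ≤ μ.colLen 0 := by
      by_contra hc
      have h1 := hk2 (μ.colLen 0) (by omega)
      have h2 := yd_iff μ (μ.colLen 0) 0
      omega
    have hk3 : μ.rowLen k + μ.colLen 0 ≤ x + k := by
      by_cases hkl' : k < μ.colLen 0
      · by_contra hc
        exact hn ((mem_beads μ x).2 ⟨k, hkl', by omega⟩)
      · have h2 := yd_iff μ k 0
        omega
    have hk4 := hk2 (k - 1) (by omega)
    have hcol : μ.colLen (x + k - μ.colLen 0) = k := by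
      apply eq_of_forall_lt_iff
      intro i'
      rw [yd_iff]
      constructor
      · intro h'
        by_contra hc
        have := μ.rowLen_anti k i' (by omega)
        omega
      · intro h'
        have := μ.rowLen_anti i' (k - 1) (by omega)
        omega
    have hmem : i < μ.colLen (x + k - μ.colLen 0) := by rw [hcol]; exact hik
    have := h (i, x + k - μ.colLen 0) (by
      rw [YoungDiagram.mem_cells, YoungDiagram.mem_iff_lt_colLen]; exact hmem)
    apply this
    simp only [YoungDiagram.hookLength]
    rw [hcol]
    have e2 : μ.rowLen i + k - i - (x + k - μ.colLen 0) - 1 = b - x := by omega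
    rw [e2]; exact hd
  · rintro h ⟨i, j⟩ hc hd
    rw [YoungDiagram.mem_cells, YoungDiagram.mem_iff_lt_rowLen] at hc
    have hc' := (yd_iff μ i j).2 hc
    simp only [YoungDiagram.hookLength] at hd
    have ha := μ.colLen_anti 0 j (by omega)
    have hb : μ.rowLen i + μ.colLen 0 - 1 - i ∈ beads μ :=
      (mem_beads _ _).2 ⟨i, by omega, by omega⟩
    have hx := h _ hb (μ.colLen 0 + j - μ.colLen j) (by omega) (by
      have e2 : μ.rowLen i + μ.colLen 0 - 1 - i - (μ.colLen 0 + j - μ.colLen j) =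
        μ.rowLen i + μ.colLen j - i - j - 1 := by omega
      rw [e2]; exact hd)
    rw [mem_beads] at hx
    obtain ⟨i', hi', e'⟩ := hx
    have := yd_iff μ i' j
    omega

lemma yd_card (μ : YoungDiagram) : μ.card = ∑ i ∈ range (μ.colLen 0), μ.rowLen i := by
  rw [YoungDiagram.card, card_eq_sum_card_fiberwise (f := Prod.fst) (t := range (μ.colLen 0))]
  · apply sum_congr rfl
    intro i _
    rw [YoungDiagram.rowLen_eq_card]; rfl
  · rintro ⟨i, j⟩ h
    rw [mem_coe, YoungDiagram.mem_cells, YoungDiagram.mem_iff_lt_colLen] at h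
    have := μ.colLen_anti 0 j (by omega)
    simp only [coe_range, Set.mem_Iio]; omega

lemma bead_sum (μ : YoungDiagram) :
    ∑ b ∈ beads μ, b = μ.card + ∑ k ∈ range (μ.colLen 0), k := by
  rw [beads, sum_image (fun a _ b _ h => bead_injf μ h), sum_add_distrib, yd_card,
    sum_range_reflect]

def SS (r s : ℕ) : Finset ℕ :=
  (range r).image (fun x => 3 * x + 1) ∪ (range s).image (fun x => 3 * x + 2)

lemma mem_SS (r s x : ℕ) : x ∈ SS r s ↔ (x % 3 = 1 ∧ x / 3 < r) ∨ (x % 3 = 2 ∧ x / 3 < s) := by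
  simp only [SS, mem_union, mem_image, mem_range]
  constructor
  · rintro (⟨a, h, e⟩ | ⟨a, h, e⟩) <;> omega
  · rintro (h | h)
    · exact Or.inl ⟨x / 3, by omega, by omega⟩
    · exact Or.inr ⟨x / 3, by omega, by omega⟩

lemma SS_disj (r s : ℕ) :
    Disjoint ((range r).image (fun x => 3 * x + 1)) ((range s).image (fun x => 3 * x + 2)) := by
  rw [disjoint_left]
  intro x h1 h2
  rw [mem_image] at h1 h2
  obtain ⟨a, _, h1⟩ := h1
  obtain ⟨b, _, h2⟩ := h2
  omega

lemma SS_card (r s : ℕ) : (SS r s).card = r + s := by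
  rw [SS, card_union_of_disjoint (SS_disj r s), card_image_of_injective _ (fun a b h => by simpa using h),
    card_image_of_injective _ (fun a b h => by simpa using h), card_range, card_range]

lemma SS_sum (r s : ℕ) : 2 * (∑ b ∈ SS r s, (b : ℤ)) = 3 * r ^ 2 - r + 3 * s ^ 2 + s := by
  rw [SS, sum_union (SS_disj r s), sum_image (fun a _ b _ h => by simpa using h),
    sum_image (fun a _ b _ h => by simpa using h)]
  have h1 : ∀ r : ℕ, 2 * ∑ x ∈ range r, ((3 * x + 1 : ℕ) : ℤ) = 3 * r ^ 2 - r := by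
    intro r
    induction r with
    | zero => simp
    | succ r ih => rw [sum_range_succ, mul_add, ih]; push_cast; ring
  have h2 : ∀ r : ℕ, 2 * ∑ x ∈ range r, ((3 * x + 2 : ℕ) : ℤ) = 3 * r ^ 2 + r := by
    intro r
    induction r with
    | zero => simp
    | succ r ih => rw [sum_range_succ, mul_add, ih]; push_cast; ring
  rw [mul_add, h1, h2]; ring

lemma gauss_sum (r : ℕ) : 2 * ∑ x ∈ range r, (x : ℤ) = r ^ 2 - r := by
  induction r with
  | zero => simp
  | succ r ih => rw [sum_range_succ, mul_add, ih]; push_cast; ring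

lemma core_card (μ : YoungDiagram) (r s : ℕ) (h : beads μ = SS r s) :
    r ^ 2 + s ^ 2 + s = μ.card + r * s := by
  have h1 := bead_sum μ
  rw [← bead_card μ, h, SS_card] at h1
  zify at h1 ⊢
  have h2 := SS_sum r s
  have h3 := gauss_sum (r + s)
  push_cast at h3
  nlinarith

lemma SS_inj (r s r' s' : ℕ) (h : SS r s = SS r' s') : r = r' ∧ s = s' := by
  have hm : ∀ x, x ∈ SS r s ↔ x ∈ SS r' s' := fun x => by rw [h]
  simp only [mem_SS] at hm
  have a1 := hm (3 * r + 1)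
  have a2 := hm (3 * r' + 1)
  have a3 := hm (3 * s + 2)
  have a4 := hm (3 * s' + 2)
  omega

lemma closed_SS (B : Finset ℕ) (h0 : 0 ∉ B) (h : ∀ b ∈ B, ∀ x, x < b → 3 ∣ b - x → x ∈ B) :
    ∃ r s, B = SS r s := by
  have key : ∀ c, ∃ r, ∀ x, 3 * x + c ∈ B ↔ x < r := by
    intro c
    have ex : ∃ r, 3 * r + c ∉ B := by
      by_contra hc
      push Not at hc
      have := hc (∑ b ∈ B, b + 1)
      have := single_le_sum (f := fun b : ℕ => b) (fun _ _ => Nat.zero_le _) this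
      simp only at this
      omega
    classical
    refine ⟨Nat.find ex, fun x => ?_⟩
    constructor
    · intro hx
      by_contra hc
      apply Nat.find_spec ex
      rcases (not_lt.1 hc).lt_or_eq with h' | h'
      · exact h _ hx _ (by omega) ⟨x - Nat.find ex, by omega⟩
      · rw [h']; exact hx
    · intro hx
      have := Nat.find_min ex hx
      tauto
  obtain ⟨r, hr⟩ := key 1
  obtain ⟨s, hs⟩ := key 2
  refine ⟨r, s, ?_⟩
  ext x
  rw [mem_SS]
  have hr' := hr (x / 3)
  have hs' := hs (x / 3)
  have : x % 3 = 0 ∨ x % 3 = 1 ∨ x % 3 = 2 := by omega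
  rcases this with c | c | c
  · constructor
    · intro hx
      exfalso
      rcases Nat.eq_zero_or_pos x with rfl | hp
      · exact h0 hx
      · exact h0 (h x hx 0 hp (by omega))
    · omega
  · rw [show 3 * (x / 3) + 1 = x by omega] at hr'
    rw [hr']; omega
  · rw [show 3 * (x / 3) + 2 = x by omega] at hs'
    rw [hs']; omega

lemma core_iff_SS (μ : YoungDiagram) : μ.IsThreeCore ↔ ∃ r s, beads μ = SS r s := by
  rw [core_iff]
  constructor
  · exact closed_SS _ (beads_zero μ)
  · rintro ⟨r, s, e⟩ b hb x hx hd
    rw [e, mem_SS] at hb ⊢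
    omega

lemma ex_core (v : ℕ × ℕ) : ∃ μ : YoungDiagram, beads μ = SS v.1 v.2 :=
  beads_surj _ (by rw [mem_SS]; omega)

noncomputable def core (v : ℕ × ℕ) : YoungDiagram := (ex_core v).choose

lemma core_spec (v : ℕ × ℕ) : beads (core v) = SS v.1 v.2 := (ex_core v).choose_spec

lemma core_isc (v : ℕ × ℕ) : (core v).IsThreeCore := (core_iff_SS _).2 ⟨_, _, core_spec v⟩

lemma core_inj : Function.Injective core := by
  rintro ⟨r, s⟩ ⟨r', s'⟩ h
  have := SS_inj r s r' s' (by
    have h1 := core_spec (r, s); have h2 := core_spec (r', s')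
    rw [h] at h1; exact h1.symm.trans h2)
  rw [this.1, this.2]

lemma core_surj (μ : YoungDiagram) (h : μ.IsThreeCore) : ∃ v, core v = μ := by
  obtain ⟨r, s, e⟩ := (core_iff_SS μ).1 h
  exact ⟨(r, s), beads_inj _ _ (by rw [core_spec, e])⟩

lemma core_QQ (v : ℕ × ℕ) (n : ℕ) : v ∈ QQ n ↔ (core v).card = n := by
  obtain ⟨r, s⟩ := v
  rw [mem_QQ]
  have := core_card _ r s (core_spec (r, s))
  omega

def TT (n : ℕ) : Finset ((ℕ × ℕ) × (ℕ × ℕ) × (ℕ × ℕ)) :=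
  (antidiagonal n).biUnion fun q => (QQ q.1) ×ˢ
    ((antidiagonal q.2).biUnion fun t => (QQ t.1) ×ˢ (QQ t.2))

lemma mem_TT (n : ℕ) (a b c : ℕ × ℕ) : (a, b, c) ∈ TT n ↔
    (core a).card + (core b).card + (core c).card = n := by
  simp only [TT, mem_biUnion, mem_product, HasAntidiagonal.mem_antidiagonal, core_QQ]
  constructor
  · rintro ⟨q, hq, h1, t, ht, h2, h3⟩
    omega
  · intro h
    exact ⟨((core a).card, (core b).card + (core c).card), by simp only; omega, rfl,
      ((core b).card, (core c).card), rfl, rfl, rfl⟩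

lemma TT_card (n : ℕ) : ((TT n).card : ℤ) = ff (n + 1) := by
  rw [TT, card_biUnion]
  · push_cast
    rw [← triple]
    apply sum_congr rfl
    intro q _
    rw [card_product, card_biUnion]
    · push_cast
      rw [QQ_card]
      congr 1
      apply sum_congr rfl
      intro t _
      rw [card_product]; push_cast; rw [QQ_card, QQ_card]
    · intro t ht t' ht' hne
      rw [Function.onFun, disjoint_left]
      rintro ⟨b, c⟩ h h'
      rw [mem_product, core_QQ, core_QQ] at h h'
      exact hne (Prod.ext (h.1.symm.trans h'.1) (h.2.symm.trans h'.2))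
  · intro q hq q' hq' hne
    rw [Function.onFun, disjoint_left]
    rintro ⟨a, b⟩ h h'
    rw [mem_product, core_QQ] at h h'
    have h1 := h.1.symm.trans h'.1
    rw [mem_coe, HasAntidiagonal.mem_antidiagonal] at hq hq'
    exact hne (Prod.ext h1 (by omega))

lemma B3_eq (n : ℕ) : (B3 n : ℤ) = ff (n + 1) := by
  rw [← TT_card, B3]
  congr 1
  rw [← Nat.card_eq_finsetCard]
  symm
  apply Nat.card_eq_of_bijective (f := fun w : TT n =>
    (⟨(core w.1.1, core w.1.2.1, core w.1.2.2), (mem_TT n _ _ _).1 w.2,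
      core_isc _, core_isc _, core_isc _⟩ :
      {p : YoungDiagram × YoungDiagram × YoungDiagram //
      p.1.card + p.2.1.card + p.2.2.card = n ∧
      p.1.IsThreeCore ∧ p.2.1.IsThreeCore ∧ p.2.2.IsThreeCore}))
  constructor
  · rintro ⟨⟨a, b, c⟩, h⟩ ⟨⟨a', b', c'⟩, h'⟩ e
    simp only [Subtype.mk.injEq, Prod.mk.injEq] at e ⊢
    exact ⟨core_inj e.1, core_inj e.2.1, core_inj e.2.2⟩
  · rintro ⟨⟨x, y, z⟩, h, hx, hy, hz⟩
    obtain ⟨a, rfl⟩ := core_surj x hx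
    obtain ⟨b, rfl⟩ := core_surj y hy
    obtain ⟨c, rfl⟩ := core_surj z hz
    exact ⟨⟨(a, b, c), (mem_TT n a b c).2 h⟩, rfl⟩

/-- For a prime p ≡ 1 (mod 3) and k, n ≥ 0:
(p²−1)·B₃(pᵏn + pᵏ − 1) + (p²ᵏ−p²)·B₃(n) = (p²ᵏ−1)·B₃(pn + p − 1). -/
theorem B3_rec_one_mod_three (p k n : ℕ) (hp : p.Prime) (hp3 : p % 3 = 1) :
    ((p : ℤ) ^ 2 - 1) * B3 (p ^ k * n + p ^ k - 1) +
      ((p : ℤ) ^ (2 * k) - (p : ℤ) ^ 2) * B3 n =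
    ((p : ℤ) ^ (2 * k) - 1) * B3 (p * n + p - 1) := by
  have h1 : p ^ k * n + p ^ k - 1 + 1 = p ^ k * (n + 1) := by
    have := pow_pos hp.pos k
    rw [mul_add, mul_one]; omega
  have h2 : p * n + p - 1 + 1 = p * (n + 1) := by
    have := hp.pos
    rw [mul_add, mul_one]; omega
  rw [B3_eq, B3_eq, B3_eq, h1, h2]
  exact ff_final p (n + 1) k hp hp3 (Nat.succ_ne_zero n)
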